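/- For every positive integer k, every 2-connected (finite simple) graph of minimum degree at least k + 1 contains k cycles C_1, …, C_k such that either (i) |E(C_{i+1})| − |E(C_i)| = 1 for all 1 ≤ i ≤ k − 1, or (ii) |E(C_{i+1})| − |E(C_i)| = 2 for all 1 ≤ i ≤ k − 1. -/

import Mathlib

/-!
Delete the ends `x`, `y` of an edge. The rest `D` of the graph, together with the sets `A` and `B` of
neighbours of `x` and `y`, is rooted 2-connected (`conn_of_twoConnected`), and a path in `D` from
`A` to `B` with `n` vertices closes through `xy` to a cycle of length `n + 2` (`HasP.cycle`). Hence
it suffices to find `k` such paths whose orders are in arithmetic progression with difference one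
or two, provided that every vertex of `D` has degree at least `k + 1`, edges to the roots included.
This is `rooted`, proved by induction on the size of `D`.

The induction step relies on a fact about sumsets (`AP.add`): the sum of progressions with `p` and
`q` terms and differences one or two contains such a progression with `p + q - 1` terms. Let `H` be a
*core* at the root `x`, in which every vertex of an exit set `E ⊆ H` is reached from `x` by paths of `q`
orders in progression. A component `C` of `D ∖ H` adjacent to `E` is again a rooted graph, with
first root neighbourhood `N(E) ∩ C`. If the degrees in this rooted graph drop by at most `q - 1`,
then induction yields `k + 1 - q` paths, and these combine with the `q` paths of the core
(`Cex.close`, `Cex.core_close`). If some part `W ⊆ C` attached at a single vertex `v` of `C` prevents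
`C` from being rooted 2-connected, then the argument is applied to `W` instead, with `v` as the
second root, and the paths found are continued through `C ∖ W`.

The case `k = 1` is connectivity. The case `k = 2` is `two_paths`, in a stronger form with one
vertex of unrestricted degree; the induction for `k ≥ 3` uses this form in `Cex.bip_one`. In a minimal
counterexample with `k ≥ 3` (`Cex`), the core is chosen as follows.

* If two neighbours of `x` are adjacent, the core is a maximum clique in `N(x)` (`Cex.caseI`).
* If two neighbours of `x` have two adjacent common neighbours, the core consists of the former two
  and of a maximum clique among their common neighbours (`Cex.caseIIa`).
* If a neighbour `t` of `x` lies in a triangle, the core is `t` with a maximum clique in `N(t)`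
  (`Cex.caseIIb`).
* Otherwise, the core is complete bipartite with sides `S` and `T ⊆ N(x)`, where `|T| > |S|` and `S` is
  as large as possible (`MaxCore`). Paths from `x` traverse `1, 3, …, 2|S| + 1` core vertices when they
  end in `T`, and `2, 4, …, 2|S|` when they end in `S`.

In the last case, the core yields a contradiction unless `N(y) ⊆ S ∪ T` (`Cex.bip_main`). As the
same holds with the roots exchanged and neighbours of a root are pairwise nonadjacent, both
neighbourhoods in `D` are then equal to `T`. Finally, some `b ∈ T` is removed from the core and used
as the last vertex before `y` (`Cex.bip_fin`).
-/

open SimpleGraph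

/-- A finite simple graph is 2-connected if it is connected, has at least 3 vertices,
and remains connected after deleting any single vertex. -/
def TwoConnected {V : Type*} [Fintype V] (G : SimpleGraph V) : Prop :=
  G.Connected ∧ 3 ≤ Fintype.card V ∧
    ∀ v : V, (G.induce ({v}ᶜ : Set V)).Connected

namespace CyclesAP

noncomputable section

open scoped Classical
open Finset

variable {V : Type*} (G : SimpleGraph V)

/-- The number of neighbours of `v` in the vertex set `X`. -/
def nd (X : Finset V) (v : V) : ℕ := #(X.filter (G.Adj v))

/-- The neighbourhood of the vertex set `T`. It may meet `T`. -/
def nb (T : Finset V) : Set V := {v | ∃ t ∈ T, G.Adj t v}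

/-- The attachment set of `W` in `D`: the vertices of `D` outside `W` with a neighbour in `W`. -/
def bd (D W : Finset V) : Finset V := (D \ W).filter fun u => ∃ w ∈ W, G.Adj w u

/-- The truth value of a proposition as `0` or `1`. -/
def ind (p : Prop) : ℕ := if p then 1 else 0

/-- The vertex sets `W` and `A` intersect. -/
def Meets (W : Finset V) (A : Set V) : Prop := ∃ w ∈ W, w ∈ A

/-- Rooted 2-connectivity. The set `D` stands for the graph obtained from `G[D]` by adding two roots
`x` and `y` whose neighbourhoods in `D` are `A ∩ D` and `B ∩ D`; this graph together with the edge
`xy` is 2-connected if and only if every nonempty `W ⊆ D` has at least two neighbours outside,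
where the roots count as neighbours too. -/
def Conn (D : Finset V) (A B : Set V) : Prop :=
  ∀ W ⊆ D, W.Nonempty → 2 ≤ #(bd G D W) + ind (Meets W A) + ind (Meets W B)

/-- `G[C]` is connected: no nonempty proper subset of `C` is closed under adjacency in `C`. -/
def Cn (C : Finset V) : Prop :=
  C.Nonempty ∧ ∀ W ⊆ C, W.Nonempty → bd G C W = ∅ → W = C

/-- There is a path with exactly `n` vertices inside `D` from a vertex of `A` to one of `B`. In
terms of roots `x` and `y` with neighbourhoods `A` and `B` this is an `x`-`y` path of
length `n + 1`. -/
def HasP (D : Finset V) (A B : Set V) (n : ℕ) : Prop :=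
  ∃ l : List V, l.length = n ∧ l.Nodup ∧ l.IsChain G.Adj ∧ (∀ v ∈ l, v ∈ D) ∧
    (∃ a ∈ A, l.head? = some a) ∧ ∃ b ∈ B, l.getLast? = some b

/-- The set `L` of natural numbers contains an arithmetic progression with `k` terms and common
difference one or two. -/
def AP (L : ℕ → Prop) (k : ℕ) : Prop :=
  ∃ a d, (d = 1 ∨ d = 2) ∧ ∀ i < k, L (a + d * i)

variable {G}

lemma mem_bd {D W : Finset V} {u : V} :
    u ∈ bd G D W ↔ u ∈ D ∧ u ∉ W ∧ ∃ w ∈ W, G.Adj w u := by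
  simp [bd, and_assoc]

lemma mem_nb {T : Finset V} {u : V} : u ∈ nb G T ↔ ∃ t ∈ T, G.Adj t u := Iff.rfl

lemma ind_le (p : Prop) : ind p ≤ 1 := by unfold ind; split_ifs <;> omega
lemma ind_pos {p : Prop} (h : p) : ind p = 1 := by simp [ind, h]
lemma ind_neg {p : Prop} (h : ¬ p) : ind p = 0 := by simp [ind, h]

/-! ### Paths -/

lemma HasP.mono {D D' : Finset V} {A B A' B' : Set V} {n : ℕ} (h : HasP G D A B n) (hD : D ⊆ D')
    (hA : ∀ v ∈ D, v ∈ A → v ∈ A') (hB : ∀ v ∈ D, v ∈ B → v ∈ B') : HasP G D' A' B' n := by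
  obtain ⟨l, h1, h2, h3, h4, ⟨a, ha, ha'⟩, b, hb, hb'⟩ := h
  exact ⟨l, h1, h2, h3, fun v hv => hD (h4 v hv),
    ⟨a, hA a (h4 a (List.mem_of_head? ha')) ha, ha'⟩,
    b, hB b (h4 b (List.mem_of_getLast? hb')) hb, hb'⟩

lemma HasP.symm {D : Finset V} {A B : Set V} {n : ℕ} (h : HasP G D A B n) : HasP G D B A n := by
  obtain ⟨l, h1, h2, h3, h4, ⟨a, ha, ha'⟩, b, hb, hb'⟩ := h
  refine ⟨l.reverse, by simpa, by simpa, ?_, by simpa, ⟨b, hb, by simpa⟩, a, ha, by simpa⟩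
  rw [List.isChain_reverse]
  exact h3.imp fun a b h => h.symm

lemma HasP.single {D : Finset V} {A B : Set V} {v : V} (hD : v ∈ D) (hA : v ∈ A) (hB : v ∈ B) :
    HasP G D A B 1 :=
  ⟨[v], rfl, by simp, by simp, by simpa, ⟨v, hA, rfl⟩, v, hB, rfl⟩

/-- A path entering a part through a neighbour of `T` extends backwards through any path
that can end at every vertex of `T`. -/
lemma glue {D D1 D2 T : Finset V} {A A2 B : Set V} {m n : ℕ} (hd : Disjoint D1 D2)
    (h1 : D1 ⊆ D) (h2 : D2 ⊆ D)
    (hp : HasP G D2 A2 B n) (hA2 : ∀ v ∈ D2, v ∈ A2 → v ∈ nb G T)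
    (hq : ∀ e ∈ T, HasP G D1 A {e} m) : HasP G D A B (m + n) := by
  obtain ⟨l, l1, l2, l3, l4, ⟨a, ha, ha'⟩, b, hb, hb'⟩ := hp
  obtain ⟨e, he, hea⟩ := hA2 a (l4 a (List.mem_of_head? ha')) ha
  obtain ⟨r, r1, r2, r3, r4, ⟨c, hc, hc'⟩, e', he', he''⟩ := hq e he
  obtain rfl : e' = e := he'
  refine ⟨r ++ l, by simp [r1, l1], ?_, ?_, ?_, ⟨c, hc, by simp [hc']⟩, b, hb, by simp [hb']⟩
  · refine List.Nodup.append r2 l2 ?_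
    intro v hv hv'
    exact Finset.disjoint_left.1 hd (r4 v hv) (l4 v hv')
  · rw [List.isChain_append]
    refine ⟨r3, l3, ?_⟩
    intro x hx y hy
    rw [he''] at hx
    rw [ha'] at hy
    simp only [Option.mem_def, Option.some.injEq] at hx hy
    subst hx hy
    exact hea
  · intro v hv
    rcases List.mem_append.1 hv with h | h
    · exact h1 (r4 v h)
    · exact h2 (l4 v h)

lemma glue' {D D1 D2 T : Finset V} {A B1 B : Set V} {m n : ℕ} (hd : Disjoint D1 D2)
    (h1 : D1 ⊆ D) (h2 : D2 ⊆ D)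
    (hp : HasP G D1 A B1 m) (hB1 : ∀ v ∈ D1, v ∈ B1 → v ∈ nb G T)
    (hq : ∀ e ∈ T, HasP G D2 {e} B n) : HasP G D A B (m + n) := by
  rw [add_comm]
  exact (glue hd.symm h2 h1 hp.symm hB1 fun e he => (hq e he).symm).symm

lemma mem_nb_singleton {t v : V} : v ∈ nb G {t} ↔ G.Adj t v := by simp [nb]

/-- A path starting at a neighbour of the endpoint of another path is appended to it. -/
lemma HasP.append {D D1 D2 : Finset V} {A B : Set V} {e : V} {m n : ℕ} (hd : Disjoint D1 D2)
    (h1 : D1 ⊆ D) (h2 : D2 ⊆ D) (hq : HasP G D1 A {e} m) (hp : HasP G D2 (nb G {e}) B n) :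
    HasP G D A B (m + n) := by
  refine glue hd h1 h2 hp (fun v _ h => h) ?_
  intro e' he'
  obtain rfl : e' = e := by simpa using he'
  exact hq

/-- In a clique, paths ending at a given vertex have all possible orders. -/
lemma cliq (i : ℕ) : ∀ (Q : Finset V) (e : V), (∀ a ∈ Q, ∀ b ∈ Q, a ≠ b → G.Adj a b) → e ∈ Q →
    i < #Q → HasP G Q Q {e} (i + 1) := by
  induction i with
  | zero =>
    intro Q e _ he _
    exact HasP.single he he rfl
  | succ i ih =>
    intro Q e hQ he hi
    have hc := card_erase_of_mem he
    obtain ⟨e', he'⟩ : (Q.erase e).Nonempty := by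
      rw [← card_pos]; omega
    have h1 := ih (Q.erase e) e' (fun a ha b hb => hQ a (mem_of_mem_erase ha) b
      (mem_of_mem_erase hb)) he' (by omega)
    have h1' : HasP G (Q.erase e) Q {e'} (i + 1) :=
      h1.mono (fun _ h => h) (fun v _ h => mem_of_mem_erase h) (fun v _ h => h)
    refine HasP.append (D1 := Q.erase e) (D2 := {e}) (by simp) (erase_subset _ _) (by simpa) h1' ?_
    refine HasP.single (by simp) ?_ rfl
    rw [mem_nb_singleton]
    exact hQ _ (mem_of_mem_erase he') _ he (ne_of_mem_erase he')

/-- In a complete bipartite graph, paths between vertices of the side `T`. -/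
lemma bip (i : ℕ) : ∀ (S T : Finset V) (t : V), Disjoint S T → (∀ s ∈ S, ∀ t ∈ T, G.Adj s t) →
    t ∈ T → i ≤ #S → i < #T → HasP G (S ∪ T) T {t} (2 * i + 1) := by
  induction i with
  | zero =>
    intro S T t _ _ ht _ _
    exact HasP.single (mem_union_right _ ht) ht rfl
  | succ i ih =>
    intro S T t hd hST ht hS hT
    have hc := card_erase_of_mem ht
    obtain ⟨t', ht'⟩ : (T.erase t).Nonempty := by
      rw [← card_pos]; omega
    obtain ⟨s, hs⟩ : S.Nonempty := by
      rw [← card_pos]; omega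
    have hc' := card_erase_of_mem hs
    have h1 := ih (S.erase s) (T.erase t) t'
      (hd.mono (erase_subset _ _) (erase_subset _ _))
      (fun a ha b hb => hST a (mem_of_mem_erase ha) b (mem_of_mem_erase hb)) ht'
      (by omega) (by omega)
    have hst : s ∉ T := fun h => Finset.disjoint_left.1 hd hs h
    have hts : t ∉ S := fun h => Finset.disjoint_left.1 hd h ht
    have h2 : HasP G (S ∪ T.erase t) T {s} (2 * i + 1 + 1) := by
      refine HasP.append (e := t') (D1 := S.erase s ∪ T.erase t) (D2 := {s}) ?_ ?_ ?_
        (h1.mono (fun _ h => h) (fun v _ h => mem_of_mem_erase h) (fun v _ h => h)) ?_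
      · simp [hst]
      · exact union_subset_union (erase_subset _ _) (fun _ h => h)
      · simp [hs]
      · refine HasP.single (by simp) ?_ rfl
        rw [mem_nb_singleton]
        exact (hST s hs t' (mem_of_mem_erase ht')).symm
    refine HasP.append (D1 := S ∪ T.erase t) (D2 := {t}) ?_ ?_ ?_ h2 ?_
    · simp [hts]
    · exact union_subset_union (fun _ h => h) (erase_subset _ _)
    · simp [ht]
    · refine HasP.single (by simp) ?_ rfl
      rw [mem_nb_singleton]
      exact hST s hs t ht

/-- In a complete bipartite graph, paths from the side `T` to a vertex of the side `S`. -/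
lemma bip' {i : ℕ} {S T : Finset V} {s : V} (hd : Disjoint S T)
    (hST : ∀ s ∈ S, ∀ t ∈ T, G.Adj s t) (hs : s ∈ S) (hS : i < #S) (hT : i < #T) :
    HasP G (S ∪ T) T {s} (2 * i + 2) := by
  obtain ⟨t, ht⟩ : T.Nonempty := by
    rw [← card_pos]; omega
  have hc := card_erase_of_mem hs
  have h1 := bip i (S.erase s) T t (hd.mono_left (erase_subset _ _))
      (fun a ha b hb => hST a (mem_of_mem_erase ha) b hb) ht (by omega) hT
  refine HasP.append (m := 2 * i + 1) (n := 1) (D1 := S.erase s ∪ T) (D2 := {s}) ?_ ?_ ?_ h1 ?_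
  · simp [fun h => Finset.disjoint_left.1 hd hs h]
  · exact union_subset_union (erase_subset _ _) (fun _ h => h)
  · simp [hs]
  · refine HasP.single (by simp) ?_ rfl
    rw [mem_nb_singleton]
    exact (hST s hs t ht).symm

/-- The last visit of a path to `T` is followed by a path leaving `T` for good. -/
lemma exit_aux {T : Finset V} {b : V} : ∀ l : List V, l.Nodup → l.IsChain G.Adj →
    l.getLast? = some b → b ∉ T → (∃ e ∈ l, e ∈ T) →
    ∃ l' : List V, l'.Nodup ∧ l'.IsChain G.Adj ∧ (∀ v ∈ l', v ∈ l ∧ v ∉ T) ∧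
      l'.getLast? = some b ∧ ∃ a ∈ nb G T, l'.head? = some a := by
  intro l
  induction l with
  | nil => intro _ _ h; simp at h
  | cons a l ih =>
    intro h1 h2 h3 h4 h5
    rw [List.nodup_cons] at h1
    by_cases h : ∃ e ∈ l, e ∈ T
    · have h3' : l.getLast? = some b := by
        obtain ⟨e, he, -⟩ := h
        cases l with
        | nil => simp at he
        | cons c l => simpa using h3
      obtain ⟨l', q1, q2, q3, q4, q5⟩ := ih h1.2 (List.IsChain.of_cons h2) h3' h4 h
      exact ⟨l', q1, q2, fun v hv => ⟨List.mem_cons_of_mem _ (q3 v hv).1, (q3 v hv).2⟩, q4, q5⟩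
    · have haT : a ∈ T := by
        obtain ⟨e, he, heT⟩ := h5
        rcases List.mem_cons.1 he with rfl | he
        · exact heT
        · exact absurd ⟨e, he, heT⟩ h
      cases l with
      | nil =>
        simp only [List.getLast?_singleton, Option.some.injEq] at h3
        exact absurd (h3 ▸ haT) h4
      | cons c l =>
        refine ⟨c :: l, h1.2, List.IsChain.of_cons h2, ?_, by simpa using h3, c, ?_, rfl⟩
        · intro v hv
          exact ⟨List.mem_cons_of_mem _ hv, fun hvT => h ⟨v, hv, hvT⟩⟩
        · rw [List.isChain_cons_cons] at h2
          exact ⟨a, haT, h2.1⟩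

lemma HasP.exit {D T : Finset V} {A B : Set V} {n : ℕ} (h : HasP G D A B n)
    (hA : ∀ v ∈ D, v ∈ A → v ∈ T) (hB : ∀ v ∈ D, v ∈ B → v ∉ T) :
    ∃ c, HasP G (D \ T) (nb G T) B c := by
  obtain ⟨l, h1, h2, h3, h4, ⟨a, ha, ha'⟩, b, hb, hb'⟩ := h
  obtain ⟨l', q1, q2, q3, q4, q5⟩ := exit_aux (G := G) (T := T) l h2 h3 hb'
    (hB b (h4 b (List.mem_of_getLast? hb')) hb)
    ⟨a, List.mem_of_head? ha', hA a (h4 a (List.mem_of_head? ha')) ha⟩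
  exact ⟨_, l', rfl, q1, q2, fun v hv => mem_sdiff.2 ⟨h4 v (q3 v hv).1, (q3 v hv).2⟩, q5, b, hb, q4⟩

/-! ### Connected sets and components -/

lemma Cn.path {C : Finset V} (hC : Cn G C) {a b : V} (ha : a ∈ C) (hb : b ∈ C) :
    ∃ n, HasP G C {a} {b} n := by
  set R := C.filter fun u => ∃ n, HasP G C {a} {u} n with hR
  have haR : a ∈ R := by
    rw [hR, mem_filter]
    exact ⟨ha, 1, HasP.single ha rfl rfl⟩
  have hRC : R = C := by
    refine hC.2 R (filter_subset _ _) ⟨a, haR⟩ ?_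
    rw [Finset.eq_empty_iff_forall_notMem]
    intro w hw
    rw [mem_bd] at hw
    obtain ⟨hwC, hwR, u, huR, huw⟩ := hw
    rw [hR, mem_filter] at huR
    obtain ⟨huC, n, l, -, h2, h3, h4, ⟨a', rfl, ha'⟩, u', rfl, hu'⟩ := huR
    refine hwR ?_
    rw [hR, mem_filter]
    refine ⟨hwC, ?_⟩
    by_cases hwl : w ∈ l
    · obtain ⟨l1, l2, rfl⟩ := List.append_of_mem hwl
      refine ⟨_, l1 ++ [w], rfl, ?_, ?_, ?_, ⟨a', rfl, ?_⟩, w, rfl, by simp⟩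
      · have : l1 ++ w :: l2 = (l1 ++ [w]) ++ l2 := by simp
        rw [this] at h2
        exact List.Nodup.of_append_left h2
      · have : l1 ++ w :: l2 = (l1 ++ [w]) ++ l2 := by simp
        rw [this] at h3
        exact (List.isChain_append.1 h3).1
      · intro v hv
        apply h4
        simp at hv ⊢
        tauto
      · cases l1 <;> simpa using ha'
    · refine ⟨_, l ++ [w], rfl, ?_, ?_, ?_, ⟨a', rfl, ?_⟩, w, rfl, by simp⟩
      · rw [List.nodup_append]
        refine ⟨h2, by simp, ?_⟩
        intro x hx y hy
        simp at hy
        rintro rfl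
        exact hwl (hy ▸ hx)
      · rw [List.isChain_append]
        refine ⟨h3, by simp, ?_⟩
        intro x hx y hy
        rw [hu'] at hx
        simp at hx hy
        rw [← hx, ← hy]
        exact huw
      · intro v hv
        simp at hv
        rcases hv with hv | rfl
        · exact h4 v hv
        · exact hwC
      · simp [ha']
  have : b ∈ R := hRC ▸ hb
  rw [hR, mem_filter] at this
  exact this.2

lemma Cn.path' {C : Finset V} (hC : Cn G C) {A B : Set V} (hA : Meets C A) (hB : Meets C B) :
    ∃ n, HasP G C A B n := by
  obtain ⟨a, ha, haA⟩ := hA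
  obtain ⟨b, hb, hbB⟩ := hB
  obtain ⟨n, h⟩ := hC.path ha hb
  refine ⟨n, h.mono (fun _ h => h) ?_ ?_⟩
  · rintro v _ rfl; exact haA
  · rintro v _ rfl; exact hbB

/-- The component `C` of `v` in `G[D]`. -/
lemma exists_comp (D : Finset V) {v : V} (hv : v ∈ D) :
    ∃ C ⊆ D, v ∈ C ∧ Cn G C ∧ bd G D C = ∅ := by
  have hne : (D.powerset.filter fun C => v ∈ C ∧ bd G D C = ∅).Nonempty := by
    refine ⟨D, ?_⟩
    simp only [mem_filter, mem_powerset]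
    refine ⟨fun _ h => h, hv, ?_⟩
    simp [bd]
  obtain ⟨C, hC, hmin⟩ := exists_min_image _ (fun C => #C) hne
  simp only [mem_filter, mem_powerset] at hC hmin
  obtain ⟨hCD, hvC, hbd⟩ := hC
  refine ⟨C, hCD, hvC, ⟨⟨v, hvC⟩, ?_⟩, hbd⟩
  intro W hWC hW hWbd
  by_contra hne
  have hss : W ⊂ C := hWC.ssubset_of_ne hne
  rw [Finset.eq_empty_iff_forall_notMem] at hbd hWbd
  simp only [mem_bd] at hbd hWbd
  by_cases hvW : v ∈ W
  · have := hmin W ⟨hWC.trans hCD, hvW, by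
      rw [Finset.eq_empty_iff_forall_notMem]
      intro u hu
      rw [mem_bd] at hu
      obtain ⟨h1, h2, w, h3, h4⟩ := hu
      by_cases huC : u ∈ C
      · exact hWbd u ⟨huC, h2, w, h3, h4⟩
      · exact hbd u ⟨h1, huC, w, hWC h3, h4⟩⟩
    have := card_lt_card hss
    omega
  · have := hmin (C \ W) ⟨sdiff_subset.trans hCD, by simp [hvC, hvW], by
      rw [Finset.eq_empty_iff_forall_notMem]
      intro u hu
      rw [mem_bd] at hu
      obtain ⟨h1, h2, w, h3, h4⟩ := hu
      rw [mem_sdiff] at h3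
      by_cases huC : u ∈ C
      · have huW : u ∈ W := by
          by_contra h
          exact h2 (mem_sdiff.2 ⟨huC, h⟩)
        exact hWbd w ⟨h3.1, h3.2, u, huW, h4.symm⟩
      · exact hbd u ⟨h1, huC, w, h3.1, h4⟩⟩
    have h5 := card_sdiff_of_subset hWC
    have h6 := card_pos.2 hW
    have h7 := card_le_card hWC
    omega

/-- Deleting from a connected set a part attached at a single vertex leaves a connected set. -/
lemma Cn.sdiff {C W : Finset V} {v : V} (hC : Cn G C) (hW : bd G C W = {v}) :
    Cn G (C \ W) := by
  have hv : v ∈ bd G C W := by rw [hW]; simp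
  have hv' := mem_bd.1 hv
  have key : ∀ X ⊆ C \ W, X.Nonempty → bd G (C \ W) X = ∅ → v ∉ X → False := by
    intro X hX hXne hXbd hvX
    have h := hC.2 X (hX.trans sdiff_subset) hXne ?_
    · exact hvX (h ▸ hv'.1)
    · rw [Finset.eq_empty_iff_forall_notMem] at hXbd ⊢
      intro u hu
      rw [mem_bd] at hu
      obtain ⟨h1, h2, x, h3, h4⟩ := hu
      by_cases huW : u ∈ W
      · have : x ∈ bd G C W := mem_bd.2 ⟨(mem_sdiff.1 (hX h3)).1, (mem_sdiff.1 (hX h3)).2, u, huW,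
          h4.symm⟩
        rw [hW, mem_singleton] at this
        exact hvX (this ▸ h3)
      · exact hXbd u (mem_bd.2 ⟨mem_sdiff.2 ⟨h1, huW⟩, h2, x, h3, h4⟩)
  refine ⟨⟨v, mem_sdiff.2 ⟨hv'.1, hv'.2.1⟩⟩, ?_⟩
  intro X hX hXne hXbd
  by_contra hne
  by_cases hvX : v ∈ X
  · refine key ((C \ W) \ X) sdiff_subset ?_ ?_ (by simp [hvX])
    · rw [sdiff_nonempty]
      intro h
      exact hne (hX.antisymm h)
    · rw [Finset.eq_empty_iff_forall_notMem] at hXbd ⊢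
      intro u hu
      rw [mem_bd] at hu
      obtain ⟨h1, h2, x, h3, h4⟩ := hu
      have huX : u ∈ X := by
        by_contra h
        exact h2 (mem_sdiff.2 ⟨h1, h⟩)
      exact hXbd x (mem_bd.2 ⟨(mem_sdiff.1 h3).1, (mem_sdiff.1 h3).2, u, huX, h4.symm⟩)
  · exact key X hX hXne hXbd hvX

end

end CyclesAP

namespace CyclesAP

noncomputable section

open scoped Classical
open Finset

variable {V : Type*} {G : SimpleGraph V}

/-! ### Degrees into a set and attachments -/

lemma Meets.mono {W W' : Finset V} {A : Set V} (h : Meets W A) (hW : W ⊆ W') : Meets W' A := by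
  obtain ⟨w, h1, h2⟩ := h
  exact ⟨w, hW h1, h2⟩

lemma ind_mono {p q : Prop} (h : p → q) : ind p ≤ ind q := by
  by_cases hp : p
  · rw [ind_pos hp, ind_pos (h hp)]
  · rw [ind_neg hp]; omega

lemma nd_le_card (X : Finset V) (v : V) : nd G X v ≤ #X := card_filter_le _ _

lemma nd_mono {X Y : Finset V} (h : X ⊆ Y) (v : V) : nd G X v ≤ nd G Y v :=
  card_le_card (filter_subset_filter _ h)

lemma nd_union_le (X Y : Finset V) (v : V) : nd G (X ∪ Y) v ≤ nd G X v + nd G Y v := by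
  unfold nd
  rw [filter_union]
  exact card_union_le _ _

lemma nd_split {D C H : Finset V} {v : V} (hv : v ∈ C) (hb : bd G D C ⊆ H) :
    nd G D v ≤ nd G C v + nd G H v := by
  refine le_trans ?_ (nd_union_le C H v)
  refine card_le_card ?_
  intro u hu
  rw [mem_filter] at hu ⊢
  refine ⟨?_, hu.2⟩
  by_cases h : u ∈ C
  · exact mem_union_left _ h
  · exact mem_union_right _ (hb (mem_bd.2 ⟨hu.1, h, v, hv, hu.2⟩))

lemma nd_eq_zero {X : Finset V} {v : V} (h : ∀ u ∈ X, ¬ G.Adj v u) : nd G X v = 0 := by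
  unfold nd
  rw [card_eq_zero, filter_eq_empty_iff]
  exact h

lemma nd_lt {X : Finset V} {u v : V} (hu : u ∈ X) (h : ¬ G.Adj v u) : nd G X v + 1 ≤ #X := by
  unfold nd
  refine card_lt_card ?_
  rw [filter_ssubset]
  exact ⟨u, hu, h⟩

lemma nd_eq_card {X : Finset V} {v : V} (h : #X ≤ nd G X v) : ∀ u ∈ X, G.Adj v u := by
  intro u hu
  by_contra h'
  have := nd_lt hu h'
  omega

lemma nd_full {X : Finset V} {v : V} (h : ∀ u ∈ X, G.Adj v u) : nd G X v = #X := by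
  unfold nd
  rw [filter_true_of_mem h]

lemma nd_pos {X : Finset V} {v : V} (h : 0 < nd G X v) : v ∈ nb G X := by
  unfold nd at h
  rw [card_pos] at h
  obtain ⟨u, hu⟩ := h
  rw [mem_filter] at hu
  exact ⟨u, hu.1, hu.2.symm⟩

lemma nd_nb {X : Finset V} {v : V} (h : v ∈ nb G X) : 0 < nd G X v := by
  obtain ⟨u, hu, h⟩ := h
  exact card_pos.2 ⟨u, mem_filter.2 ⟨hu, h.symm⟩⟩

lemma nd_not_nb {X : Finset V} {v : V} (h : v ∉ nb G X) : nd G X v = 0 := by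
  by_contra h'
  exact h (nd_pos (by omega))

lemma nd_singleton (t v : V) : nd G {t} v = ind (v ∈ nb G {t}) := by
  by_cases h : v ∈ nb G {t}
  · rw [ind_pos h]
    have := nd_nb h
    have := nd_le_card (G := G) {t} v
    rw [card_singleton] at this
    omega
  · rw [ind_neg h, nd_not_nb h]

lemma nd_erase {X : Finset V} {b : V} (hb : b ∈ X) (v : V) :
    nd G X v = nd G (X.erase b) v + ind (v ∈ nb G {b}) := by
  rw [← nd_singleton]
  unfold nd
  rw [← card_union_of_disjoint, ← filter_union]
  · congr 2
    ext u
    by_cases h : u = b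
    · simp [h, hb]
    · simp [h]
  · refine disjoint_filter_filter ?_
    simp

/-- An extra vertex adjacent to `v`. -/
lemma nd_insert {X : Finset V} {b v : V} (hb : b ∉ X) (h : G.Adj v b) :
    nd G (insert b X) v = nd G X v + 1 := by
  rw [nd_erase (mem_insert_self b X), erase_insert hb, ind_pos]
  exact mem_nb_singleton.2 h.symm

lemma nd_insert' {X : Finset V} {b v : V} (h : ¬ G.Adj v b) :
    nd G (insert b X) v = nd G X v := by
  unfold nd
  rw [filter_insert, if_neg h]

lemma exists_two {X : Finset V} {v : V} (h : 2 ≤ nd G X v) :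
    ∃ a ∈ X, ∃ b ∈ X, a ≠ b ∧ G.Adj v a ∧ G.Adj v b := by
  unfold nd at h
  obtain ⟨a, ha, b, hb, hab⟩ := one_lt_card.1 (show 1 < _ from h)
  rw [mem_filter] at ha hb
  exact ⟨a, ha.1, b, hb.1, hab, ha.2, hb.2⟩

lemma bd_singleton {D : Finset V} {v : V} : #(bd G D {v}) = nd G D v := by
  unfold nd
  congr 1
  ext u
  rw [mem_bd, mem_filter]
  simp only [mem_singleton, exists_eq_left]
  constructor
  · rintro ⟨h1, -, h3⟩; exact ⟨h1, h3⟩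
  · rintro ⟨h1, h3⟩; exact ⟨h1, fun h => G.loopless.irrefl _ (h ▸ h3), h3⟩

lemma meets_singleton {v : V} {A : Set V} : Meets {v} A ↔ v ∈ A := by simp [Meets]

lemma bd_le_bd_add {D Z W : Finset V} {v : V} (hW : W ⊆ Z) (hZ : bd G D Z ⊆ {v}) :
    #(bd G D W) ≤ #(bd G Z W) + ind (Meets W (nb G {v})) := by
  by_cases h : Meets W (nb G {v})
  · rw [ind_pos h]
    refine le_trans (card_le_card (t := insert v (bd G Z W)) ?_) (card_insert_le _ _)
    intro u hu
    rw [mem_bd] at hu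
    obtain ⟨h1, h2, w, h3, h4⟩ := hu
    by_cases huZ : u ∈ Z
    · exact mem_insert_of_mem (mem_bd.2 ⟨huZ, h2, w, h3, h4⟩)
    · have := hZ (mem_bd.2 ⟨h1, huZ, w, hW h3, h4⟩)
      rw [mem_singleton] at this
      simp [this]
  · rw [ind_neg h]
    refine card_le_card ?_
    intro u hu
    rw [mem_bd] at hu ⊢
    obtain ⟨h1, h2, w, h3, h4⟩ := hu
    by_cases huZ : u ∈ Z
    · exact ⟨huZ, h2, w, h3, h4⟩
    · have := hZ (mem_bd.2 ⟨h1, huZ, w, hW h3, h4⟩)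
      rw [mem_singleton] at this
      exact absurd ⟨w, h3, mem_nb_singleton.2 (this ▸ h4.symm)⟩ h

lemma comp_off {D H : Finset V} {v : V} (hv : v ∈ D) (hvH : v ∉ H) :
    ∃ C ⊆ D, v ∈ C ∧ Disjoint C H ∧ Cn G C ∧ bd G D C ⊆ H := by
  obtain ⟨C, h1, h2, h3, h4⟩ := exists_comp (G := G) (D \ H) (mem_sdiff.2 ⟨hv, hvH⟩)
  refine ⟨C, h1.trans sdiff_subset, h2, disjoint_of_subset_left h1 sdiff_disjoint, h3, ?_⟩
  intro u hu
  rw [mem_bd] at hu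
  by_contra h
  rw [Finset.eq_empty_iff_forall_notMem] at h4
  exact h4 u (mem_bd.2 ⟨mem_sdiff.2 ⟨hu.1, h⟩, hu.2⟩)

/-! ### Rooted 2-connectivity -/

lemma Conn.symm {D : Finset V} {A B : Set V} (h : Conn G D A B) : Conn G D B A := by
  intro W hW hne
  have := h W hW hne
  omega

/-- Rooted 2-connectivity of a connected set has to be tested on connected subsets
with a single attachment only. -/
lemma conn_of {C : Finset V} {A B : Set V} (hC : Cn G C) (hA : Meets C A) (hB : Meets C B)
    (h : ∀ W ⊆ C, Cn G W → ∀ v, bd G C W = {v} → ¬ Meets W A → ¬ Meets W B → False) :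
    Conn G C A B := by
  intro X hX ⟨x, hx⟩
  obtain ⟨W, h1, h2, h3, h4⟩ := exists_comp (G := G) X hx
  have hle : #(bd G C W) ≤ #(bd G C X) := by
    refine card_le_card ?_
    intro u hu
    rw [mem_bd] at hu ⊢
    obtain ⟨q1, q2, w, q3, q4⟩ := hu
    refine ⟨q1, fun huX => ?_, w, h1 q3, q4⟩
    rw [Finset.eq_empty_iff_forall_notMem] at h4
    exact h4 u (mem_bd.2 ⟨huX, q2, w, q3, q4⟩)
  have hmA : ind (Meets W A) ≤ ind (Meets X A) := ind_mono fun h => h.mono h1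
  have hmB : ind (Meets W B) ≤ ind (Meets X B) := ind_mono fun h => h.mono h1
  suffices 2 ≤ #(bd G C W) + ind (Meets W A) + ind (Meets W B) by omega
  by_contra hcon
  have hWC : W ⊆ C := h1.trans hX
  rcases Nat.lt_or_ge 0 #(bd G C W) with h0 | h0
  · have h5 : #(bd G C W) = 1 := by omega
    obtain ⟨v, hv⟩ := card_eq_one.1 h5
    refine h W hWC h3 v hv ?_ ?_
    · intro h; rw [ind_pos h] at hcon; omega
    · intro h; rw [ind_pos h] at hcon; omega
  · have h5 := hC.2 W hWC h3.1 (card_eq_zero.1 (by omega))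
    rw [h5, ind_pos hA, ind_pos hB] at hcon
    omega

lemma Conn.deg {D : Finset V} {A B : Set V} (h : Conn G D A B) {v : V} (hv : v ∈ D) :
    2 ≤ nd G D v + ind (v ∈ A) + ind (v ∈ B) := by
  have := h {v} (by simpa) (by simp)
  rw [bd_singleton, meets_singleton, meets_singleton] at this
  exact this

lemma Conn.cn_meets {D C : Finset V} {A B : Set V} (h : Conn G D A B) (hC : C ⊆ D)
    (hne : C.Nonempty) (hb : bd G D C = ∅) : Meets C A ∧ Meets C B := by
  have := h C hC hne
  rw [hb, card_empty] at this
  have h1 := ind_le (Meets C A)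
  have h2 := ind_le (Meets C B)
  constructor
  · by_contra h; rw [ind_neg h] at this; omega
  · by_contra h; rw [ind_neg h] at this; omega

lemma Conn.path {D : Finset V} {A B : Set V} (h : Conn G D A B) (hne : D.Nonempty) :
    ∃ n, HasP G D A B n := by
  obtain ⟨v, hv⟩ := hne
  obtain ⟨C, h1, h2, h3, h4⟩ := exists_comp (G := G) D hv
  obtain ⟨hA, hB⟩ := h.cn_meets h1 h3.1 h4
  obtain ⟨n, hn⟩ := h3.path' hA hB
  exact ⟨n, hn.mono h1 (fun _ _ h => h) (fun _ _ h => h)⟩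

/-- The part beyond a cut vertex can be traversed. -/
lemma Conn.reach {D W : Finset V} {A B : Set V} {v : V} (h : Conn G D A B) (hW : W ⊆ D)
    (hb : bd G D W ⊆ {v}) (hv : v ∈ D \ W) (hB : ¬ Meets W B) :
    ∃ n, HasP G (D \ W) {v} B n := by
  obtain ⟨C, h1, h2, h3, h4⟩ := exists_comp (G := G) (D \ W) hv
  have hCB : Meets C B := by
    have hcut : bd G D (C ∪ W) = ∅ := by
      rw [Finset.eq_empty_iff_forall_notMem] at h4 ⊢
      intro u hu
      rw [mem_bd] at hu
      obtain ⟨q1, q2, w, q3, q4⟩ := hu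
      rw [mem_union, not_or] at q2
      rcases mem_union.1 q3 with hw | hw
      · exact h4 u (mem_bd.2 ⟨mem_sdiff.2 ⟨q1, q2.2⟩, q2.1, w, hw, q4⟩)
      · have := hb (mem_bd.2 ⟨q1, q2.2, w, hw, q4⟩)
        rw [mem_singleton] at this
        exact q2.1 (this ▸ h2)
    obtain ⟨-, w, hw, hwB⟩ := h.cn_meets (union_subset (h1.trans sdiff_subset) hW)
      ⟨v, mem_union_left _ h2⟩ hcut
    rcases mem_union.1 hw with hw | hw
    · exact ⟨w, hw, hwB⟩
    · exact absurd ⟨w, hw, hwB⟩ hB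
  obtain ⟨n, hn⟩ := h3.path' (A := {v}) ⟨v, h2, rfl⟩ hCB
  exact ⟨n, hn.mono h1 (fun _ _ h => h) (fun _ _ h => h)⟩

/-- A subset `W` with at most one neighbour (the root `y` included) towards which `B` leads can
replace `D`: the neighbourhood of that neighbour plays the role of `B`. -/
lemma Conn.cut {D W : Finset V} {A B : Set V} (h : Conn G D A B) (hW : W ⊆ D)
    (hcut : #(bd G D W) + ind (Meets W B) ≤ 1) :
    ∃ B' c, Conn G W A B' ∧ (∀ n, HasP G W A B' n → HasP G D A B (c + n)) ∧
      ∀ v ∈ W, nd G D v + ind (v ∈ B) ≤ nd G W v + ind (v ∈ B') := by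
  rcases Nat.lt_or_ge 0 #(bd G D W) with h0 | h0
  · obtain ⟨v, hv⟩ := card_eq_one.1 (show #(bd G D W) = 1 by omega)
    have hB : ¬ Meets W B := by
      intro h; rw [ind_pos h] at hcut; omega
    have hv' : v ∈ bd G D W := by simp [hv]
    rw [mem_bd] at hv'
    obtain ⟨c, hc⟩ := h.reach hW hv.subset (mem_sdiff.2 ⟨hv'.1, hv'.2.1⟩) hB
    refine ⟨nb G {v}, c, ?_, ?_, ?_⟩
    · intro X hX hXne
      have h1 := h X (hX.trans hW) hXne
      have h2 := bd_le_bd_add hX hv.subset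
      have h3 : ind (Meets X B) = 0 := ind_neg fun h => hB (h.mono hX)
      omega
    · intro n hn
      rw [add_comm]
      refine glue' (T := {v}) disjoint_sdiff hW sdiff_subset hn (fun _ _ h => h) ?_
      intro e he
      rw [mem_singleton] at he
      subst he
      exact hc
    · intro w hw
      rw [← nd_singleton, ind_neg fun h => hB ⟨w, hw, h⟩]
      exact nd_split hw hv.subset
  · have hb := card_eq_zero.1 (show #(bd G D W) = 0 by omega)
    refine ⟨B, 0, ?_, ?_, ?_⟩
    · intro X hX hXne
      have h1 := h X (hX.trans hW) hXne
      have h2 : #(bd G D X) ≤ #(bd G W X) := by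
        refine card_le_card ?_
        intro u hu
        rw [mem_bd] at hu ⊢
        obtain ⟨q1, q2, w, q3, q4⟩ := hu
        refine ⟨?_, q2, w, q3, q4⟩
        by_contra hu
        have : u ∈ bd G D W := mem_bd.2 ⟨q1, hu, w, hX q3, q4⟩
        simp [hb] at this
      omega
    · intro n hn
      rw [zero_add]
      exact hn.mono hW (fun _ _ h => h) (fun _ _ h => h)
    · intro w hw
      have := nd_split (H := ∅) hw hb.subset
      rw [nd_eq_zero (X := ∅) (by simp)] at this
      omega

/-! ### Arithmetic progressions -/

lemma AP.mono {L L' : ℕ → Prop} {k k' : ℕ} (h : AP L k) (hk : k' ≤ k) (hL : ∀ n, L n → L' n) :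
    AP L' k' := by
  obtain ⟨a, d, hd, h⟩ := h
  exact ⟨a, d, hd, fun i hi => hL _ (h i (by omega))⟩

lemma AP.shift {L L' : ℕ → Prop} {k : ℕ} (c : ℕ) (h : AP L k) (hL : ∀ n, L n → L' (c + n)) :
    AP L' k := by
  obtain ⟨a, d, hd, h⟩ := h
  refine ⟨c + a, d, hd, fun i hi => ?_⟩
  rw [add_assoc]
  exact hL _ (h i hi)

lemma AP.one {L : ℕ → Prop} {a : ℕ} (h : L a) : AP L 1 := by
  refine ⟨a, 1, Or.inl rfl, fun i hi => ?_⟩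
  obtain rfl : i = 0 := by omega
  simpa using h

/-- The sumset of progressions with `p` and `q` terms and differences one or two
contains a progression with `p + q - 1` terms of that kind. -/
lemma AP.add {L L' : ℕ → Prop} {p q a d k : ℕ} (h : AP L p) (hp : 1 ≤ p) (hq : 1 ≤ q)
    (hk : k + 1 ≤ p + q) (hd : d = 1 ∨ d = 2)
    (hL : ∀ i < q, ∀ n, L n → L' (a + d * i + n)) : AP L' k := by
  obtain ⟨a0, d0, hd0, h⟩ := h
  have key : ∀ i j, i < q → j < p → L' (a + d * i + (a0 + d0 * j)) :=
    fun i j hi hj => hL i hi _ (h j hj)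
  rcases Nat.lt_or_ge q 2 with hq2 | hq2
  · refine ⟨a + a0, d0, hd0, fun t ht => ?_⟩
    convert key 0 t (by omega) (by omega) using 1
    ring
  rcases Nat.lt_or_ge p 2 with hp2 | hp2
  · refine ⟨a + a0, d, hd, fun t ht => ?_⟩
    convert key t 0 (by omega) (by omega) using 1
    ring
  rcases hd with rfl | rfl <;> rcases hd0 with rfl | rfl
  · refine ⟨a + a0, 1, Or.inl rfl, fun t ht => ?_⟩
    convert key (min t (q - 1)) (t - min t (q - 1)) (by omega) (by omega) using 1
    omega
  · refine ⟨a + a0, 1, Or.inl rfl, fun t ht => ?_⟩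
    convert key (t - 2 * min (t / 2) (p - 1)) (min (t / 2) (p - 1)) (by omega) (by omega) using 1
    omega
  · refine ⟨a + a0, 1, Or.inl rfl, fun t ht => ?_⟩
    convert key (min (t / 2) (q - 1)) (t - 2 * min (t / 2) (q - 1)) (by omega) (by omega) using 1
    omega
  · refine ⟨a + a0, 2, Or.inr rfl, fun t ht => ?_⟩
    convert key (min t (q - 1)) (t - min t (q - 1)) (by omega) (by omega) using 1
    omega

end

end CyclesAP

namespace CyclesAP

noncomputable section

open scoped Classical
open Finset

variable {V : Type*} {G : SimpleGraph V}

/-! ### Two paths in the presence of an exceptional vertex -/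

lemma bd_sub {D C H W : Finset V} {u : V} (hW : W ⊆ C) (hC : bd G D C ⊆ H) (hu : u ∈ bd G D W) :
    u ∈ bd G C W ∨ u ∈ H := by
  rw [mem_bd] at hu
  obtain ⟨h1, h2, w, h3, h4⟩ := hu
  by_cases h : u ∈ C
  · exact Or.inl (mem_bd.2 ⟨h, h2, w, h3, h4⟩)
  · exact Or.inr (hC (mem_bd.2 ⟨h1, h, w, hW h3, h4⟩))

lemma not_mem_of_bd {D W T : Finset V} {u : V} (hu : u ∈ bd G D W) (h : ¬ Meets W (nb G T)) :
    u ∉ T := by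
  rw [mem_bd] at hu
  obtain ⟨h1, h2, w, h3, h4⟩ := hu
  exact fun hT => h ⟨w, h3, u, hT, h4.symm⟩

lemma mem_bd_of_meets {D W : Finset V} {t : V} (ht : t ∈ D) (htW : t ∉ W)
    (h : Meets W (nb G {t})) : t ∈ bd G D W := by
  obtain ⟨w, h1, h2⟩ := h
  exact mem_bd.2 ⟨ht, htW, w, h1, (mem_nb_singleton.1 h2).symm⟩

/-- The attachments of a part `W` of a component `C` of `D ∖ H`, when `W` is not joined to `T`. -/
lemma bd_bad {D C H W T : Finset V} {v : V} (hW : W ⊆ C) (hC : bd G D C ⊆ H)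
    (hv : bd G C W = {v}) (h : ¬ Meets W (nb G T)) : bd G D W ⊆ insert v (H \ T) := by
  intro u hu
  rw [mem_insert, mem_sdiff]
  rcases bd_sub hW hC hu with h1 | h1
  · rw [hv, mem_singleton] at h1
    exact Or.inl h1
  · exact Or.inr ⟨h1, not_mem_of_bd hu h⟩

lemma meets_nb_of_bd {D W T : Finset V} {u : V} (hu : u ∈ bd G D W) (hT : u ∈ T) :
    Meets W (nb G T) := by
  by_contra h
  exact not_mem_of_bd hu h hT

lemma AP.two {L : ℕ → Prop} {a d : ℕ} (hd : d = 1 ∨ d = 2) (h1 : L a) (h2 : L (a + d)) :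
    AP L 2 := by
  refine ⟨a, d, hd, fun i hi => ?_⟩
  obtain rfl | rfl : i = 0 ∨ i = 1 := by omega
  · simpa using h1
  · simpa using h2

lemma Conn.path_from {D : Finset V} {A B : Set V} (h : Conn G D A B) {v : V} (hv : v ∈ D) :
    ∃ n, HasP G D {v} B n := by
  have := h.reach (W := ∅) (v := v) (by simp) (by simp [bd]) (by simpa) (by simp [Meets])
  simpa using this

/-- A minimal counterexample to the existence of two paths of suitable lengths when all vertices
but `z` have degree at least three, the edges to the roots included. -/
structure ECex (G : SimpleGraph V) (D : Finset V) (A B : Set V) (z : V) : Prop where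
  conn : Conn G D A B
  ne : ∃ v ∈ D, v ≠ z
  deg : ∀ v ∈ D, v ≠ z → 3 ≤ nd G D v + ind (v ∈ A) + ind (v ∈ B)
  no : ¬ AP (HasP G D A B) 2
  ih : ∀ (D' : Finset V) (A' B' : Set V), #D' < #D → Conn G D' A' B' → (∃ v ∈ D', v ≠ z) →
    (∀ v ∈ D', v ≠ z → 3 ≤ nd G D' v + ind (v ∈ A') + ind (v ∈ B')) → AP (HasP G D' A' B') 2

namespace ECex

variable {D : Finset V} {A B : Set V} {z : V}

lemma symm (h : ECex G D A B z) : ECex G D B A z where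
  conn := h.conn.symm
  ne := h.ne
  deg v hv hvz := by have := h.deg v hv hvz; omega
  no h' := h.no (h'.mono le_rfl fun n => HasP.symm)
  ih := h.ih

lemma claimA (h : ECex G D A B z) {W : Finset V} (hW : W ⊆ D) (hWD : W ≠ D)
    (hz : ∃ v ∈ W, v ≠ z) : 2 ≤ #(bd G D W) + ind (Meets W B) := by
  by_contra hcon
  obtain ⟨B', c, h1, h2, h3⟩ := h.conn.cut hW (by omega)
  refine h.no ((h.ih W A B' (card_lt_card (hW.ssubset_of_ne hWD)) h1 hz ?_).shift c h2)
  intro v hv hvz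
  have := h3 v hv
  have := h.deg v (hW hv) hvz
  omega

/-- Adjacent neighbours `a`, `b` of the root form a core with two paths to each of them. -/
lemma step1 (h : ECex G D A B z) {a b : V} (haD : a ∈ D) (hbD : b ∈ D) (ha : a ∈ A) (hb : b ∈ A)
    (hab : G.Adj a b) : False := by
  have hne := hab.ne
  have hT : ∀ x ∈ ({a, b} : Finset V), ∀ y ∈ ({a, b} : Finset V), x ≠ y → G.Adj x y := by
    intro x hx y hy hxy
    simp only [mem_insert, mem_singleton] at hx hy
    rcases hx with rfl | rfl <;> rcases hy with rfl | rfl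
    · exact absurd rfl hxy
    · exact hab
    · exact hab.symm
    · exact absurd rfl hxy
  have hTD : ({a, b} : Finset V) ⊆ D := by
    intro x hx
    simp only [mem_insert, mem_singleton] at hx
    rcases hx with rfl | rfl <;> assumption
  have hTA : ∀ x ∈ ({a, b} : Finset V), x ∈ A := by
    intro x hx
    simp only [mem_insert, mem_singleton] at hx
    rcases hx with rfl | rfl <;> assumption
  have hq : ∀ i < 2, ∀ e ∈ ({a, b} : Finset V), HasP G {a, b} A {e} (i + 1) := by
    intro i hi e he
    refine (cliq i {a, b} e hT he ?_).mono (fun _ h => h) (fun v hv _ => hTA v hv)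
      (fun _ _ h => h)
    rwa [card_pair hne]
  by_cases hB : ∃ e ∈ ({a, b} : Finset V), e ∈ B
  · obtain ⟨e, he, heB⟩ := hB
    have h' : ∀ i < 2, HasP G D A B (i + 1) := by
      intro i hi
      refine (hq i hi e he).mono hTD (fun _ _ h => h) ?_
      rintro v - rfl
      exact heB
    exact h.no (AP.two (a := 1) (d := 1) (Or.inl rfl) (h' 0 (by omega)) (h' 1 (by omega)))
  · push Not at hB
    obtain ⟨n, hn⟩ := h.conn.path_from haD
    obtain ⟨c, hc⟩ := hn.exit (T := {a, b}) (by rintro v - rfl; simp)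
      (fun v _ hv hvT => hB v hvT hv)
    have h' : ∀ i < 2, HasP G D A B (i + 1 + c) := fun i hi =>
      glue disjoint_sdiff hTD sdiff_subset hc (fun _ _ h => h) (hq i hi)
    refine h.no (AP.two (a := 1 + c) (d := 1) (Or.inl rfl) ?_ ?_)
    · simpa using h' 0 (by omega)
    · have := h' 1 (by omega)
      rwa [add_right_comm] at this

lemma step2_aux (h : ECex G D A B z) {s a b : V} (hsD : s ∈ D) (haD : a ∈ D) (hbD : b ∈ D)
    (ha : a ∈ A) (hb : b ∈ A) (hab : a ≠ b) (hsa : G.Adj s a) (hsb : G.Adj s b) (haz : a ≠ z) :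
    False := by
  have hdis : Disjoint {s} ({a, b} : Finset V) := by
    simp [hsa.ne, hsb.ne]
  have hTA : ∀ x ∈ ({a, b} : Finset V), x ∈ A := by
    intro x hx
    simp only [mem_insert, mem_singleton] at hx
    rcases hx with rfl | rfl <;> assumption
  have hTD : ({s} : Finset V) ∪ {a, b} ⊆ D := by
    intro x hx
    simp only [mem_union, mem_insert, mem_singleton] at hx
    rcases hx with rfl | rfl | rfl <;> assumption
  have hq : ∀ i < 2, ∀ e ∈ ({a, b} : Finset V), HasP G ({s} ∪ {a, b}) A {e} (2 * i + 1) := by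
    intro i hi e he
    have := bip (G := G) i {s} {a, b} e hdis (by simp [hsa, hsb]) he (by simp; omega)
      (by rw [card_pair hab]; omega)
    obtain ⟨l, h1, h2, h3, h4, ⟨x, hx, hx'⟩, h5⟩ := this
    exact ⟨l, h1, h2, h3, h4, ⟨x, hTA x hx, hx'⟩, h5⟩
  by_cases hB : ∃ e ∈ ({a, b} : Finset V), e ∈ B
  · obtain ⟨e, he, heB⟩ := hB
    have h' : ∀ i < 2, HasP G D A B (2 * i + 1) := by
      intro i hi
      refine (hq i hi e he).mono hTD (fun _ _ h => h) ?_
      rintro v - rfl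
      exact heB
    exact h.no (AP.two (a := 1) (d := 2) (Or.inr rfl) (h' 0 (by omega)) (h' 1 (by omega)))
  · push Not at hB
    obtain ⟨X, hXD, haX, hXs, hX, hXb⟩ := comp_off (G := G) (H := {s}) haD (by simp [hsa.ne'])
    rw [disjoint_singleton_right] at hXs
    have hXB : Meets X B := by
      by_contra hXB
      have h1 := h.claimA hXD (by rintro rfl; exact hXs hsD) ⟨a, haX, haz⟩
      have h2 := card_le_card hXb
      rw [ind_neg hXB] at h1
      rw [card_singleton] at h2
      omega
    obtain ⟨n, hn⟩ := hX.path' (A := {a}) ⟨a, haX, rfl⟩ hXB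
    obtain ⟨c, hc⟩ := hn.exit (T := {a, b}) (by rintro v - rfl; simp)
      (fun v _ hv hvT => hB v hvT hv)
    have h' : ∀ i < 2, HasP G D A B (2 * i + 1 + c) := fun i hi =>
      glue (D1 := {s} ∪ {a, b}) (D2 := X \ {a, b}) (by
        rw [disjoint_union_left]
        refine ⟨?_, disjoint_sdiff⟩
        simp [hXs]) hTD (sdiff_subset.trans hXD) hc (fun _ _ h => h) (hq i hi)
    refine h.no (AP.two (a := 1 + c) (d := 2) (Or.inr rfl) ?_ ?_)
    · simpa using h' 0 (by omega)
    · have := h' 1 (by omega)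
      rwa [show 2 * 1 + 1 + c = 1 + c + 2 by ring] at this

/-- No vertex has two neighbours in `A`. -/
lemma step2 (h : ECex G D A B z) {s : V} (hs : s ∈ D) : nd G (D.filter (· ∈ A)) s ≤ 1 := by
  by_contra hcon
  obtain ⟨a, ha, b, hb, hab, hsa, hsb⟩ := exists_two (G := G) (X := D.filter (· ∈ A)) (v := s) (by omega)
  rw [mem_filter] at ha hb
  by_cases haz : a = z
  · exact h.step2_aux hs hb.1 ha.1 hb.2 ha.2 hab.symm hsb hsa (haz ▸ hab.symm)
  · exact h.step2_aux hs ha.1 hb.1 ha.2 hb.2 hab hsa hsb haz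

lemma nd_le_ind {T : Finset V} {v : V} (h : nd G T v ≤ 1) : nd G T v ≤ ind (v ∈ nb G T) := by
  by_cases hv : v ∈ nb G T
  · rwa [ind_pos hv]
  · rw [nd_not_nb hv]; omega

/-- A component of `D ∖ A` that meets `B` consists of `z` only: by `step2`, it loses no degree when
its neighbours in `A` are contracted to the root. -/
lemma step3 (h : ECex G D A B z) {C : Finset V} (hCD : C ⊆ D)
    (hdis : Disjoint C (D.filter (· ∈ A))) (hC : Cn G C) (hb : bd G D C ⊆ D.filter (· ∈ A))
    (hCB : Meets C B) {v : V} (hv : v ∈ C) : v = z := by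
  have hCA : ∀ v ∈ C, v ∉ A := fun v hv hvA =>
    Finset.disjoint_left.1 hdis hv (mem_filter.2 ⟨hCD hv, hvA⟩)
  have hCA' : ¬ Meets C A := fun ⟨v, hv, hvA⟩ => hCA v hv hvA
  by_contra hvz
  have hCT : Meets C (nb G (D.filter (· ∈ A))) := by
    have h1 := h.conn C hCD hC.1
    rw [ind_neg hCA'] at h1
    have h2 := ind_le (Meets C B)
    obtain ⟨u, hu⟩ : (bd G D C).Nonempty := by rw [← card_pos]; omega
    exact meets_nb_of_bd hu (hb hu)
  have hlt : #C < #D := by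
    refine card_lt_card (hCD.ssubset_of_ne ?_)
    rintro rfl
    obtain ⟨w, -, t, ht, -⟩ := hCT
    rw [mem_filter] at ht
    exact hCA t ht.1 ht.2
  refine h.no ((h.ih C (nb G (D.filter (· ∈ A))) B hlt ?_ ⟨v, hv, hvz⟩ ?_).shift 1 ?_)
  · refine conn_of hC hCT hCB ?_
    intro W hW hWc u hu hWT hWB
    have h1 := h.conn W (hW.trans hCD) hWc.1
    have h2 := card_le_card (bd_bad hW hb hu hWT)
    rw [Finset.sdiff_self, insert_empty_eq, card_singleton] at h2
    rw [ind_neg hWB, ind_neg fun h => hCA' (h.mono hW)] at h1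
    omega
  · intro w hw hwz
    have h1 := h.deg w (hCD hw) hwz
    have h2 := nd_split hw hb
    have h3 := nd_le_ind (h.step2 (hCD hw))
    rw [ind_neg (hCA w hw)] at h1
    omega
  · intro n hn
    refine glue hdis.symm (filter_subset _ _) hCD hn (fun _ _ h => h) ?_
    intro e he
    exact HasP.single he (mem_filter.1 he).2 rfl

lemma step4 (h : ECex G D A B z) {b : V} (hbD : b ∈ D) (hb : b ∈ B) : b ∈ A := by
  by_contra hbA
  obtain ⟨C, hCD, hbC, hdis, hC, hbd⟩ := comp_off (G := G) (H := D.filter (· ∈ A)) hbD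
    (by simp [hbA])
  have hCz := fun v hv => h.step3 hCD hdis hC hbd ⟨b, hbC, hb⟩ (v := v) hv
  have h1 := h.conn.deg hbD
  rw [ind_neg hbA, ind_pos hb] at h1
  obtain ⟨a, ha, hab⟩ := nd_pos (show 0 < nd G D b by omega)
  have haC : a ∉ C := fun haC => hab.ne ((hCz a haC).trans (hCz b hbC).symm)
  have haA : a ∈ A := (mem_filter.1 (hbd (mem_bd.2 ⟨ha, haC, b, hbC, hab.symm⟩))).2
  have haB : a ∉ B := fun haB => h.symm.step1 ha hbD haB hb hab
  obtain ⟨C', hCD', haC', hdis', hC', hbd'⟩ := comp_off (G := G) (H := D.filter (· ∈ B)) ha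
    (by simp [haB])
  have := h.symm.step3 hCD' hdis' hC' hbd' ⟨a, haC', haA⟩ haC'
  exact hab.ne (this.trans (hCz b hbC).symm)

lemma contra (h : ECex G D A B z) : False := by
  obtain ⟨u, huD, huA, huz⟩ : ∃ u ∈ D, u ∉ A ∧ u ≠ z := by
    obtain ⟨v, hv, hvz⟩ := h.ne
    by_cases hvA : v ∈ A
    · have h1 := h.deg v hv hvz
      have h2 := ind_le (v ∈ A)
      have h3 := ind_le (v ∈ B)
      obtain ⟨u, hu, huv⟩ := nd_pos (show 0 < nd G D v by omega)
      have huA : u ∉ A := fun huA => h.step1 hu hv huA hvA huv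
      by_cases huz : u = z
      · have h4 := h.conn.deg hu
        rw [ind_neg huA, ind_neg fun h' => huA (h.step4 hu h')] at h4
        obtain ⟨a, ha, b, hb, hab, hua, hub⟩ := exists_two (show 2 ≤ nd G D u by omega)
        by_cases haA : a ∈ A
        · refine ⟨b, hb, fun hbA => ?_, fun hbz => ?_⟩
          · have h5 := h.step2 hu
            have h6 := card_le_card (s := {a, b})
              (t := (D.filter (· ∈ A)).filter (G.Adj u)) (by
                intro x hx
                simp only [mem_insert, mem_singleton] at hx
                simp only [mem_filter]
                rcases hx with rfl | rfl
                · exact ⟨⟨ha, haA⟩, hua⟩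
                · exact ⟨⟨hb, hbA⟩, hub⟩)
            rw [card_pair hab] at h6
            unfold nd at h5
            omega
          · exact hub.ne (huz.trans hbz.symm)
        · exact ⟨a, ha, haA, fun haz => hua.ne (huz.trans haz.symm)⟩
      · exact ⟨u, hu, huA, huz⟩
    · exact ⟨v, hv, hvA, hvz⟩
  obtain ⟨C, hCD, huC, hdis, hC, hbd⟩ := comp_off (G := G) (H := D.filter (· ∈ A)) huD
    (by simp [huA])
  have hCA : ∀ v ∈ C, v ∉ A := fun v hv hvA =>
    Finset.disjoint_left.1 hdis hv (mem_filter.2 ⟨hCD hv, hvA⟩)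
  have hCB : ∀ v ∈ C, v ∉ B := fun v hv hvB => hCA v hv (h.step4 (hCD hv) hvB)
  have hcut : ∀ W ⊆ C, W.Nonempty → 2 ≤ #(bd G D W) := by
    intro W hW hne
    have := h.conn W (hW.trans hCD) hne
    rwa [ind_neg fun ⟨v, hv, hvA⟩ => hCA v (hW hv) hvA,
      ind_neg fun ⟨v, hv, hvB⟩ => hCB v (hW hv) hvB] at this
  obtain ⟨a, ha, b, hb, hab⟩ := one_lt_card.1 (hcut C (fun _ h => h) ⟨u, huC⟩)
  have haT := hbd ha
  have hlt : #C < #D := by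
    refine card_lt_card (hCD.ssubset_of_ne ?_)
    rintro rfl
    rw [mem_filter] at haT
    exact hCA a haT.1 haT.2
  refine h.no ((h.ih C (nb G {a}) (nb G ((D.filter (· ∈ A)).erase a)) hlt ?_ ⟨u, huC, huz⟩
    ?_).shift 2 ?_)
  · refine conn_of hC (meets_nb_of_bd ha (by simp))
      (meets_nb_of_bd hb (mem_erase.2 ⟨hab.symm, hbd hb⟩)) ?_
    intro W hW hWc v hv h1 h2
    have h3 := hcut W hW hWc.1
    have h4 : bd G D W ⊆ {v} := by
      intro x hx
      have h5 := not_mem_of_bd hx h1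
      have h6 := not_mem_of_bd hx h2
      rcases bd_sub hW hbd hx with h | h
      · rwa [hv] at h
      · rw [mem_singleton] at h5
        exact absurd (mem_erase.2 ⟨h5, h⟩) h6
    have := card_le_card h4
    rw [card_singleton] at this
    omega
  · intro w hw hwz
    have h1 := h.deg w (hCD hw) hwz
    have h2 := nd_split hw hbd
    have h3 := h.step2 (hCD hw)
    have h4 := nd_erase haT w (G := G)
    have h5 := nd_le_ind (G := G) (T := (D.filter (· ∈ A)).erase a) (v := w) (by omega)
    rw [ind_neg (hCA w hw), ind_neg (hCB w hw)] at h1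
    omega
  · intro n hn
    have h1 : HasP G (insert a C) A (nb G ((D.filter (· ∈ A)).erase a)) (1 + n) := by
      refine glue (D1 := {a}) (D2 := C) (T := {a}) ?_ (by simp) (subset_insert _ _) hn
        (fun _ _ h => h) ?_
      · rw [disjoint_singleton_left]
        exact Finset.disjoint_right.1 hdis haT
      · intro e he
        rw [mem_singleton] at he
        subst he
        exact HasP.single (by simp) (mem_filter.1 haT).2 rfl
    have h2 : HasP G D A B (1 + n + 1) := by
      refine glue' (D1 := insert a C) (D2 := (D.filter (· ∈ A)).erase a) ?_ ?_ ?_ h1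
        (fun _ _ h => h) ?_
      · rw [disjoint_insert_left]
        exact ⟨by simp, disjoint_of_subset_right (erase_subset _ _) hdis⟩
      · exact insert_subset (mem_filter.1 haT).1 hCD
      · exact (erase_subset _ _).trans (filter_subset _ _)
      · intro e he
        have he' := mem_filter.1 (mem_of_mem_erase he)
        exact HasP.single he rfl (h.symm.step4 he'.1 he'.2)
    rwa [show 2 + n = 1 + n + 1 by ring]

end ECex

/-- Two paths whose lengths differ by one or two exist if all vertices but possibly `z`
have degree at least three, the edges to the roots included. -/
lemma two_paths (z : V) (N : ℕ) : ∀ (D : Finset V) (A B : Set V), #D ≤ N → Conn G D A B →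
    (∃ v ∈ D, v ≠ z) → (∀ v ∈ D, v ≠ z → 3 ≤ nd G D v + ind (v ∈ A) + ind (v ∈ B)) →
    AP (HasP G D A B) 2 := by
  induction N with
  | zero =>
    rintro D A B hD - ⟨v, hv, -⟩
    have := card_pos.2 ⟨v, hv⟩
    omega
  | succ N ih =>
    intro D A B hD h1 h2 h3
    by_contra hno
    exact ECex.contra (G := G) (D := D) (A := A) (B := B) (z := z)
      ⟨h1, h2, h3, hno, fun D' A' B' hlt => ih D' A' B' (by omega)⟩

end

end CyclesAP

namespace CyclesAP

noncomputable section

open scoped Classical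
open Finset

variable {V : Type*} {G : SimpleGraph V}

/-! ### Minimal counterexamples -/

/-- A minimal counterexample (with respect to the size of `D`, for all root neighbourhoods and all
numbers of paths) to the existence of `k ≥ 3` rooted paths whose lengths are in arithmetic
progression with difference one or two. -/
structure Cex (G : SimpleGraph V) (D : Finset V) (A B : Set V) (k : ℕ) : Prop where
  hk : 3 ≤ k
  ne : D.Nonempty
  conn : Conn G D A B
  deg : ∀ v ∈ D, k + 1 ≤ nd G D v + ind (v ∈ A) + ind (v ∈ B)
  no : ¬ AP (HasP G D A B) k
  ih : ∀ (D' : Finset V) (A' B' : Set V) (k' : ℕ), #D' < #D → D'.Nonempty → 1 ≤ k' →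
    Conn G D' A' B' → (∀ v ∈ D', k' + 1 ≤ nd G D' v + ind (v ∈ A') + ind (v ∈ B')) →
    AP (HasP G D' A' B') k'

lemma nd_pair (u v w : V) : nd G {u, v} w ≤ ind (w ∈ nb G {u}) + ind (w ∈ nb G {v}) := by
  rw [← nd_singleton, ← nd_singleton]
  exact nd_union_le {u} {v} w

lemma nd_self (v : V) : nd G {v} v = 0 := by
  refine nd_eq_zero ?_
  intro u hu
  rw [mem_singleton] at hu
  subst hu
  exact G.loopless.irrefl _

lemma bd_self (D : Finset V) : bd G D D = ∅ := by simp [bd]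

lemma bd_subset {D W : Finset V} : bd G D W ⊆ D := fun _ hu => (mem_bd.1 hu).1

/-- The attachment of a set beyond a cut vertex. -/
lemma bd_beyond {D W : Finset V} {s : V} (hb : bd G D W ⊆ {s}) :
    bd G D ((D \ W) \ {s}) ⊆ {s} := by
  intro u hu
  rw [mem_bd] at hu
  obtain ⟨h1, h2, w, h3, h4⟩ := hu
  rw [mem_sdiff, mem_sdiff] at h3
  by_contra hus
  have huW : u ∈ W := by
    by_contra huW
    exact h2 (mem_sdiff.2 ⟨mem_sdiff.2 ⟨h1, huW⟩, hus⟩)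
  exact h3.2 (hb (mem_bd.2 ⟨h3.1.1, h3.1.2, u, huW, h4.symm⟩))

namespace Cex

variable {D : Finset V} {A B : Set V} {k : ℕ}

lemma symm (h : Cex G D A B k) : Cex G D B A k where
  hk := h.hk
  ne := h.ne
  conn := h.conn.symm
  deg v hv := by have := h.deg v hv; omega
  no h' := h.no (h'.mono le_rfl fun n => HasP.symm)
  ih := h.ih

/-- The induction step: the paths inside a smaller rooted set `Z` extend to `D` in `q` ways whose
lengths form an arithmetic progression. This is worth `q - 1` units of degree. -/
lemma close (h : Cex G D A B k) {Z : Finset V} {A' B' : Set V} {q : ℕ} (a d : ℕ)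
    (hZ : Z ⊆ D) (hZD : Z ≠ D) (hne : Z.Nonempty) (hc : Conn G Z A' B') (hq : 1 ≤ q)
    (hd : d = 1 ∨ d = 2)
    (hloss : ∀ v ∈ Z, nd G D v + ind (v ∈ A) + ind (v ∈ B) + 1 ≤
      nd G Z v + ind (v ∈ A') + ind (v ∈ B') + q)
    (hp : ∀ i < q, ∀ n, HasP G Z A' B' n → HasP G D A B (a + d * i + n)) : False := by
  refine h.no (AP.add (p := max 1 (k + 1 - q)) (h.ih Z A' B' _
    (card_lt_card (hZ.ssubset_of_ne hZD)) hne (by omega) hc ?_) (by omega) hq (by omega) hd hp)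
  intro v hv
  have h1 := hloss v hv
  have h2 := h.deg v (hZ hv)
  have h3 := hc.deg hv
  omega

/-- A proper subset has at least two neighbours outside when the root `x` is disregarded. -/
lemma claimA (h : Cex G D A B k) {W : Finset V} (hW : W ⊆ D) (hWD : W ≠ D)
    (hne : W.Nonempty) : 2 ≤ #(bd G D W) + ind (Meets W B) := by
  by_contra hcon
  obtain ⟨B', c, h1, h2, h3⟩ := h.conn.cut hW (by omega)
  have := h.hk
  refine h.no ((h.ih W A B' k (card_lt_card (hW.ssubset_of_ne hWD)) hne (by omega) h1 ?_).shift c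
    h2)
  intro v hv
  have := h3 v hv
  have := h.deg v (hW hv)
  omega

lemma meets_A (h : Cex G D A B k) : Meets D A := (h.conn.cn_meets (fun _ h => h) h.ne (bd_self D)).1

lemma conn_side (h : Cex G D A B k) {W : Finset V} {s : V} (hW : W ⊆ D) (hWD : W ≠ D)
    (hb : bd G D W ⊆ {s}) : Conn G W (nb G {s}) B := by
  intro X hX hXne
  have h1 := h.claimA (hX.trans hW) (fun hXD => hWD (hW.antisymm (hXD ▸ hX))) hXne
  have h2 := bd_le_bd_add hX hb
  omega

/-- A cut vertex would split the graph into parts whose paths combine. -/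
lemma claimC (h : Cex G D A B k) {W : Finset V} (hW : W ⊆ D) (hne : W.Nonempty)
    (hb : #(bd G D W) ≤ 1) : D ⊆ W ∪ bd G D W := by
  by_cases hWD : W = D
  · rw [hWD]; exact subset_union_left
  have h0 := h.claimA hW hWD hne
  have h0' := ind_le (Meets W B)
  obtain ⟨s, hs⟩ := card_eq_one.1 (show #(bd G D W) = 1 by omega)
  have hs' : s ∈ bd G D W := by simp [hs]
  have hsm := mem_bd.1 hs'
  rw [hs]
  by_contra hcon
  have hk := h.hk
  set W' := (D \ W) \ {s} with hW'
  have hW'D : W' ⊆ D := sdiff_subset.trans sdiff_subset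
  have hsW' : s ∉ W' := by simp [hW']
  have hb' : bd G D W' ⊆ {s} := bd_beyond hs.subset
  have hW'ne : W'.Nonempty := by
    rw [Finset.not_subset] at hcon
    obtain ⟨x, hx, hx'⟩ := hcon
    rw [mem_union, not_or] at hx'
    exact ⟨x, mem_sdiff.2 ⟨mem_sdiff.2 ⟨hx, hx'.1⟩, hx'.2⟩⟩
  have hW'ne' : W' ≠ D := fun h' => hsW' (h' ▸ hsm.1)
  obtain ⟨a, d, hd, hap⟩ := h.ih W' (nb G {s}) B (k - 1)
    (card_lt_card (hW'D.ssubset_of_ne hW'ne')) hW'ne (by omega) (h.conn_side hW'D hW'ne' hb') (by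
      intro v hv
      have h1 := h.deg v (hW'D hv)
      have h2 := nd_split hv hb'
      rw [nd_singleton] at h2
      have := ind_le (v ∈ A)
      omega)
  refine h.close (Z := W) (A' := A) (B' := nb G {s}) (q := k - 1) (1 + a) d hW hWD hne
    (h.symm.conn_side hW hWD hs.subset).symm (by omega) hd ?_ ?_
  · intro v hv
    have h2 := nd_split hv hs.subset
    rw [nd_singleton] at h2
    have := ind_le (v ∈ B)
    omega
  · intro i hi n hn
    rw [add_comm]
    refine glue' (D1 := W) (D2 := D \ W) (T := {s}) disjoint_sdiff hW sdiff_subset hn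
      (fun _ _ h => h) ?_
    intro e he
    rw [mem_singleton] at he
    subst he
    rw [add_assoc]
    refine HasP.append (D1 := {e}) (D2 := W') (by simpa using hsW')
      (by simpa using ⟨hsm.1, hsm.2.1⟩)
      sdiff_subset (HasP.single (by simp) rfl rfl) (hap i hi)

/-- No connected part avoiding the roots is attached at two vertices only, which lie on the
remainders of an `x`-`y` path. -/
lemma twocut (h : Cex G D A B k) {W E1 E2 : Finset V} {u v : V} {c1 c2 : ℕ} (hW : W ⊆ D)
    (hWc : Cn G W) (hA : ¬ Meets W A) (hB : ¬ Meets W B) (hb : bd G D W ⊆ {u, v})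
    (hE1 : E1 ⊆ D) (hE2 : E2 ⊆ D) (hd1 : Disjoint E1 W) (hd2 : Disjoint E2 W)
    (hd : Disjoint E1 E2) (h1 : HasP G E1 A {u} c1) (h2 : HasP G E2 {v} B c2) : False := by
  have hu : u ∈ E1 := by
    obtain ⟨l, -, -, -, h4, -, b, rfl, hl⟩ := h1
    exact h4 _ (List.mem_of_getLast? hl)
  have hv : v ∈ E2 := by
    obtain ⟨l, -, -, -, h4, ⟨b, rfl, hl⟩, -⟩ := h2
    exact h4 _ (List.mem_of_head? hl)
  have huv : u ≠ v := fun huv => Finset.disjoint_left.1 hd hu (huv ▸ hv)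
  have hWD : W ≠ D := by
    rintro rfl
    exact Finset.disjoint_left.1 hd1 hu (hE1 hu)
  have hcut : ∀ X ⊆ W, X.Nonempty → 2 ≤ #(bd G D X) := by
    intro X hX hne
    have := h.claimA (hX.trans hW) (fun hXD => hWD (hW.antisymm (hXD ▸ hX))) hne
    rwa [ind_neg fun h' => hB (h'.mono hX)] at this
  have hbeq : bd G D W = {u, v} := by
    refine eq_of_subset_of_card_le hb ?_
    rw [card_pair huv]
    exact hcut W (fun _ h => h) hWc.1
  refine h.close (Z := W) (A' := nb G {u}) (B' := nb G {v}) (q := 1) (c1 + c2) 1 hW hWD hWc.1 ?_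
    le_rfl (Or.inl rfl) ?_ ?_
  · refine conn_of hWc (meets_nb_of_bd (u := u) (D := D) (by simp [hbeq]) (by simp))
      (meets_nb_of_bd (u := v) (D := D) (by simp [hbeq]) (by simp)) ?_
    intro X hX hXc x hx h1 h2
    have h3 := hcut X hX hXc.1
    have h4 : bd G D X ⊆ {x} := by
      intro y hy
      have h5 := not_mem_of_bd hy h1
      have h6 := not_mem_of_bd hy h2
      rcases bd_sub hX hb hy with h | h
      · rwa [hx] at h
      · rw [mem_singleton] at h5 h6
        simp [h5, h6] at h
    have := card_le_card h4
    rw [card_singleton] at this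
    omega
  · intro w hw
    have h3 := nd_split hw hb
    have h4 := nd_pair (G := G) u v w
    rw [ind_neg fun h' => hA ⟨w, hw, h'⟩, ind_neg fun h' => hB ⟨w, hw, h'⟩]
    omega
  · intro i hi n hn
    obtain rfl : i = 0 := by omega
    have h3 : HasP G (E1 ∪ W) A (nb G {v}) (c1 + n) :=
      HasP.append hd1 subset_union_left subset_union_right h1 hn
    have h4 := glue' (D := D) (T := {v}) (D1 := E1 ∪ W) (D2 := E2) (by
      rw [disjoint_union_left]; exact ⟨hd, hd2.symm⟩) (union_subset hE1 hW) hE2 h3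
      (fun _ _ h => h) (by
        intro e he
        rw [mem_singleton] at he
        subst he
        exact h2)
    convert h4 using 1
    ring

lemma two_le (h : Cex G D A B k) : ∀ b, ∃ b' ∈ D, b' ∈ B ∧ b' ≠ b := by
  intro b
  by_cases hbD : b ∈ D
  · have hbne : D.erase b ≠ D := fun h' => notMem_erase b D ((Finset.ext_iff.1 h' b).2 hbD)
    have hne : (D.erase b).Nonempty := by
      by_contra hne
      rw [not_nonempty_iff_eq_empty, erase_eq_empty_iff] at hne
      rcases hne with hne | hne
      · simp [hne] at hbD
      · have h1 := h.deg b hbD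
        rw [hne, nd_self] at h1
        have := ind_le (b ∈ A)
        have := ind_le (b ∈ B)
        have := h.hk
        omega
    have h1 := h.claimA (erase_subset b D) hbne hne
    have h2 : bd G D (D.erase b) ⊆ {b} := by
      intro u hu
      rw [mem_bd] at hu
      rw [mem_singleton]
      by_contra h'
      exact hu.2.1 (mem_erase.2 ⟨h', hu.1⟩)
    have h3 := card_le_card h2
    rw [card_singleton] at h3
    have hm : Meets (D.erase b) B := by
      by_contra hm
      rw [ind_neg hm] at h1
      omega
    obtain ⟨b', hb', hb'B⟩ := hm
    exact ⟨b', mem_of_mem_erase hb', hb'B, ne_of_mem_erase hb'⟩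
  · obtain ⟨b', h1, h2⟩ := h.symm.meets_A
    exact ⟨b', h1, h2, by rintro rfl; exact hbD h1⟩

end Cex

end

end CyclesAP

namespace CyclesAP

noncomputable section

open scoped Classical
open Finset

variable {V : Type*} {G : SimpleGraph V}

/-! ### Adjacent neighbours of a root -/

/-- The vertices of `Q` are pairwise adjacent. -/
def Clq (G : SimpleGraph V) (Q : Finset V) : Prop := ∀ a ∈ Q, ∀ b ∈ Q, a ≠ b → G.Adj a b

/-- `Q` is a clique of maximum size in `X`. -/
def MaxClq (G : SimpleGraph V) (X Q : Finset V) : Prop :=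
  Q ⊆ X ∧ Clq G Q ∧ ∀ Q' ⊆ X, Clq G Q' → #Q' ≤ #Q

lemma Clq.mono {Q Q' : Finset V} (h : Clq G Q) (hQ : Q' ⊆ Q) : Clq G Q' :=
  fun a ha b hb => h a (hQ ha) b (hQ hb)

lemma Clq.insert {Q : Finset V} {v : V} (h : Clq G Q) (hv : ∀ u ∈ Q, G.Adj v u) :
    Clq G (insert v Q) := by
  intro a ha b hb hab
  rw [mem_insert] at ha hb
  rcases ha with rfl | ha <;> rcases hb with rfl | hb
  · exact absurd rfl hab
  · exact hv b hb
  · exact (hv a ha).symm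
  · exact h a ha b hb hab

lemma exists_maxClq {X : Finset V} {a b : V} (ha : a ∈ X) (hb : b ∈ X) (hab : G.Adj a b) :
    ∃ Q, MaxClq G X Q ∧ 2 ≤ #Q := by
  have hc : Clq G {a, b} := by
    refine Clq.insert ?_ (by simpa)
    intro x hx y hy
    simp_all
  have hX : ({a, b} : Finset V) ⊆ X := by
    intro x hx
    simp only [mem_insert, mem_singleton] at hx
    rcases hx with rfl | rfl <;> assumption
  obtain ⟨Q, hQ, hmax⟩ := exists_max_image (X.powerset.filter (Clq G)) (fun Q => #Q)
    ⟨{a, b}, by simp [hX, hc]⟩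
  simp only [mem_filter, mem_powerset] at hQ hmax
  refine ⟨Q, ⟨hQ.1, hQ.2, fun Q' h1 h2 => hmax Q' ⟨h1, h2⟩⟩, ?_⟩
  have := hmax _ ⟨hX, hc⟩
  rwa [card_pair hab.ne] at this

lemma MaxClq.nd_lt {X Q : Finset V} {v : V} (h : MaxClq G X Q) (hv : v ∈ X) (hvQ : v ∉ Q) :
    nd G Q v + 1 ≤ #Q := by
  by_contra hcon
  have h1 := h.2.2 (Insert.insert v Q) (insert_subset hv h.1)
    (h.2.1.insert (nd_eq_card (by omega)))
  rw [card_insert_of_notMem hvQ] at h1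
  omega

namespace Cex

variable {D : Finset V} {A B : Set V} {k : ℕ}

/-- A connected part `C` with attachments in `H` inherits rooted 2-connectivity for `A'` and `B'` as
soon as it meets both and these sets account for all attachments and for `B`. -/
lemma conn_part (h : Cex G D A B k) {C H : Finset V} {A' B' : Set V} (hC : C ⊆ D)
    (hCD : C ≠ D) (hCc : Cn G C) (hH : bd G D C ⊆ H) (hA' : Meets C A') (hB' : Meets C B')
    (hT : ∀ u ∈ H, ∀ w ∈ C, G.Adj w u → w ∈ A' ∨ w ∈ B')
    (hB : ∀ w ∈ C, w ∈ B → w ∈ A' ∨ w ∈ B') : Conn G C A' B' := by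
  refine conn_of hCc hA' hB' ?_
  intro W hW hWc v hv h1 h2
  have h3 := h.claimA (hW.trans hC) (fun hWD => hCD (hC.antisymm (hWD ▸ hW))) hWc.1
  have h4 : bd G D W ⊆ {v} := by
    intro u hu
    rcases bd_sub hW hH hu with h5 | h5
    · rwa [hv] at h5
    · obtain ⟨-, -, w, hw, hwu⟩ := mem_bd.1 hu
      rcases hT u h5 w (hW hw) hwu with h6 | h6
      · exact absurd ⟨w, hw, h6⟩ h1
      · exact absurd ⟨w, hw, h6⟩ h2
  have h5 : ¬ Meets W B := by
    rintro ⟨w, hw, hwB⟩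
    rcases hB w (hW hw) hwB with h6 | h6
    · exact h1 ⟨w, hw, h6⟩
    · exact h2 ⟨w, hw, h6⟩
  have h6 := card_le_card h4
  rw [ind_neg h5] at h3
  rw [card_singleton] at h6
  omega

lemma ne_of_disjoint {C H : Finset V} {u : V} (hu : u ∈ H) (huD : u ∈ D) (h : Disjoint C H) :
    C ≠ D := by
  rintro rfl
  exact Finset.disjoint_left.1 h huD hu

lemma bd_nonempty (h : Cex G D A B k) {C : Finset V} (hC : C ⊆ D) (hCD : C ≠ D)
    (hne : C.Nonempty) : (bd G D C).Nonempty := by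
  have h1 := h.claimA hC hCD hne
  have h2 := ind_le (Meets C B)
  rw [← card_pos]
  omega

lemma caseI_aux (h : Cex G D A B k) {Q : Finset V} (hQ : MaxClq G (D.filter (· ∈ A)) Q)
    (hQ2 : 2 ≤ #Q) {b : V} (hbD : b ∈ D) (hb : b ∈ B) (hbQ : b ∉ Q) : False := by
  have hQD : Q ⊆ D := hQ.1.trans (filter_subset _ _)
  obtain ⟨C, hCD, hbC, hdis, hC, hbd⟩ := comp_off (G := G) hbD hbQ
  obtain ⟨q, hq⟩ : Q.Nonempty := by rw [← card_pos]; omega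
  have hCne := ne_of_disjoint hq (hQD hq) hdis
  obtain ⟨u, hu⟩ := h.bd_nonempty hCD hCne hC.1
  refine h.close (Z := C) (A' := nb G Q) (B' := B) (q := #Q) 1 1 hCD hCne hC.1 ?_ (by omega)
    (Or.inl rfl) ?_ ?_
  · exact h.conn_part hCD hCne hC hbd (meets_nb_of_bd hu (hbd hu)) ⟨b, hbC, hb⟩
      (fun u hu w _ hwu => Or.inl ⟨u, hu, hwu.symm⟩) (fun w _ hw => Or.inr hw)
  · intro v hv
    have h1 := nd_split hv hbd
    have h2 := ind_le (v ∈ A)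
    by_cases hvQ : v ∈ nb G Q
    · rw [ind_pos hvQ]
      by_cases hvA : v ∈ A
      · have := hQ.nd_lt (mem_filter.2 ⟨hCD hv, hvA⟩) (Finset.disjoint_left.1 hdis hv)
        omega
      · have := nd_le_card (G := G) Q v
        rw [ind_neg hvA]
        omega
    · rw [nd_not_nb hvQ] at h1
      omega
  · intro i hi n hn
    rw [one_mul, add_comm 1 i]
    refine glue (D1 := Q) (T := Q) hdis.symm hQD hCD hn (fun _ _ h => h) ?_
    intro e he
    exact (cliq i Q e hQ.2.1 he hi).mono (fun _ h => h)
      (fun v _ hv => (mem_filter.1 (hQ.1 hv)).2) (fun _ _ h => h)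

/-- The neighbours of a root are pairwise nonadjacent. -/
lemma caseI (h : Cex G D A B k) {a1 a2 : V} (h1D : a1 ∈ D) (h2D : a2 ∈ D) (h1A : a1 ∈ A)
    (h2A : a2 ∈ A) (h12 : G.Adj a1 a2) : False := by
  obtain ⟨Q, hQ, hQ2⟩ := exists_maxClq (X := D.filter (· ∈ A)) (mem_filter.2 ⟨h1D, h1A⟩)
    (mem_filter.2 ⟨h2D, h2A⟩) h12
  have hQD : Q ⊆ D := hQ.1.trans (filter_subset _ _)
  have hQA : ∀ v ∈ Q, v ∈ A := fun v hv => (mem_filter.1 (hQ.1 hv)).2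
  have hBQ : ∀ b ∈ D, b ∈ B → b ∈ Q := by
    intro b hbD hb
    by_contra hbQ
    exact h.caseI_aux hQ hQ2 hbD hb hbQ
  obtain ⟨b, hbD, hb⟩ := h.symm.meets_A
  have hbQ := hBQ b hbD hb
  have hmk : #Q < k := by
    by_contra hmk
    refine h.no ⟨1, 1, Or.inl rfl, fun i hi => ?_⟩
    rw [one_mul, add_comm 1 i]
    refine (cliq i Q b hQ.2.1 hbQ (by omega)).mono hQD (fun v _ hv => hQA v hv) ?_
    rintro v - rfl
    exact hb
  obtain ⟨c, hcD, hcQ, hbc⟩ : ∃ c ∈ D, c ∉ Q ∧ G.Adj b c := by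
    by_contra hcon
    push Not at hcon
    have h1 : nd G D b ≤ nd G Q b := by
      refine card_le_card ?_
      intro u hu
      rw [mem_filter] at hu ⊢
      refine ⟨?_, hu.2⟩
      by_contra huQ
      exact hcon u hu.1 huQ hu.2
    have h2 := nd_lt hbQ (G.loopless.irrefl b)
    have h3 := h.deg b hbD
    have := ind_le (b ∈ A)
    have := ind_le (b ∈ B)
    omega
  obtain ⟨C, hCD, hcC, hdis, hC, hbd⟩ := comp_off (G := G) hcD hcQ
  have hCQ : ∀ v ∈ C, v ∉ Q := fun v hv => Finset.disjoint_left.1 hdis hv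
  have hCne := ne_of_disjoint hbQ hbD hdis
  have hCB : ∀ v ∈ C, v ∉ B := fun v hv hvB => hCQ v hv (hBQ v (hCD hv) hvB)
  have hCB' : ¬ Meets C B := fun ⟨v, hv, hvB⟩ => hCB v hv hvB
  have hCb : Meets C (nb G {b}) := ⟨c, hcC, mem_nb_singleton.2 hbc⟩
  -- exchanging `b` for another vertex would give a maximum clique avoiding `b`
  have hex : ∀ v ∈ C, v ∈ A → nd G (Q.erase b) v + 1 ≤ #(Q.erase b) := by
    intro v hv hvA
    by_contra hcon
    have hall := nd_eq_card (G := G) (X := Q.erase b) (v := v) (by omega)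
    have hvb : ¬ G.Adj v b := by
      intro hvb
      have h1 := hQ.nd_lt (mem_filter.2 ⟨hCD hv, hvA⟩) (hCQ v hv)
      have h2 := nd_erase hbQ v (G := G)
      have h3 := card_erase_of_mem hbQ
      rw [ind_pos (mem_nb_singleton.2 hvb.symm)] at h2
      omega
    have hcard : #(insert v (Q.erase b)) = #Q := by
      rw [card_insert_of_notMem fun h' => hCQ v hv (mem_of_mem_erase h'), card_erase_of_mem hbQ]
      omega
    refine h.caseI_aux (Q := insert v (Q.erase b)) ⟨?_, ?_, ?_⟩ (by omega) hbD hb ?_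
    · exact insert_subset (mem_filter.2 ⟨hCD hv, hvA⟩) ((erase_subset _ _).trans hQ.1)
    · exact (hQ.2.1.mono (erase_subset _ _)).insert hall
    · rw [hcard]
      exact hQ.2.2
    · rw [mem_insert, not_or]
      refine ⟨?_, notMem_erase b Q⟩
      rintro rfl
      exact hCQ b hv hbQ
  by_cases hsp : 3 ≤ #Q ∨ ¬ Meets C A
  · have hcd := card_erase_of_mem hbQ
    refine h.close (Z := C) (A' := nb G (Q.erase b)) (B' := nb G {b}) (q := #Q - 1) 2 1 hCD hCne
      hC.1 ?_ (by omega) (Or.inl rfl) ?_ ?_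
    · refine h.conn_part hCD hCne hC hbd ?_ hCb ?_ (fun w hw hwB => absurd hwB (hCB w hw))
      · have h1 := h.claimA hCD hCne hC.1
        rw [ind_neg hCB'] at h1
        obtain ⟨u, hu, hub⟩ := exists_mem_ne (show 1 < #(bd G D C) by omega) b
        exact meets_nb_of_bd hu (mem_erase.2 ⟨hub, hbd hu⟩)
      · intro u hu w hw hwu
        by_cases hub : u = b
        · exact Or.inr (mem_nb_singleton.2 (hub ▸ hwu.symm))
        · exact Or.inl ⟨u, mem_erase.2 ⟨hub, hu⟩, hwu.symm⟩
    · intro v hv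
      have h1 := nd_split hv hbd
      have h2 := nd_erase hbQ v (G := G)
      have h3 := ind_le (v ∈ A)
      rw [ind_neg (hCB v hv)]
      by_cases hvQ : v ∈ nb G (Q.erase b)
      · rw [ind_pos hvQ]
        by_cases hvA : v ∈ A
        · have := hex v hv hvA
          omega
        · have := nd_le_card (G := G) (Q.erase b) v
          rw [ind_neg hvA]
          omega
      · rw [nd_not_nb hvQ] at h2
        rcases hsp with hsp | hsp
        · omega
        · rw [ind_neg fun hvA => hsp ⟨v, hv, hvA⟩]
          omega
    · intro i hi n hn
      have h1 : HasP G (Q.erase b ∪ C) A (nb G {b}) (i + 1 + n) := by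
        refine glue (D1 := Q.erase b) (T := Q.erase b)
          (disjoint_of_subset_left (erase_subset _ _) hdis.symm) subset_union_left
          subset_union_right hn (fun _ _ h => h) ?_
        intro e he
        exact (cliq i (Q.erase b) e (hQ.2.1.mono (erase_subset _ _)) he (by omega)).mono
          (fun _ h => h) (fun v _ hv => hQA v (mem_of_mem_erase hv)) (fun _ _ h => h)
      rw [show 2 + 1 * i + n = i + 1 + n + 1 by ring]
      refine glue' (D2 := {b}) (T := {b}) ?_ (union_subset ((erase_subset _ _).trans hQD) hCD)
        (by simpa) h1 (fun _ _ h => h) ?_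
      · rw [disjoint_singleton_right, mem_union, not_or]
        exact ⟨notMem_erase b Q, fun h' => hCQ b h' hbQ⟩
      · intro e he
        rw [mem_singleton] at he
        subst he
        exact HasP.single (by simp) rfl hb
  · push Not at hsp
    obtain ⟨hQ3, hCA⟩ := hsp
    obtain ⟨b', hb'D, hb'B, hbb'⟩ := h.two_le b
    have hQB : ∀ v ∈ Q, v ∈ B := by
      have h1 : ({b, b'} : Finset V) = Q := by
        refine eq_of_subset_of_card_le ?_ ?_
        · intro x hx
          simp only [mem_insert, mem_singleton] at hx
          rcases hx with rfl | rfl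
          · exact hbQ
          · exact hBQ _ hb'D hb'B
        · rw [card_pair hbb'.symm]
          omega
      intro v hv
      rw [← h1] at hv
      simp only [mem_insert, mem_singleton] at hv
      rcases hv with rfl | rfl <;> assumption
    refine h.close (Z := C) (A' := A) (B' := nb G Q) (q := 2) 1 1 hCD hCne hC.1 ?_ (by omega)
      (Or.inl rfl) ?_ ?_
    · refine h.conn_part hCD hCne hC hbd hCA ⟨c, hcC, b, hbQ, hbc⟩
        (fun u hu w _ hwu => Or.inr ⟨u, hu, hwu.symm⟩) (fun w hw hwB => absurd hwB (hCB w hw))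
    · intro v hv
      have h1 := nd_split hv hbd
      have h2 := nd_le_card (G := G) Q v
      rw [ind_neg (hCB v hv)]
      by_cases hvQ : v ∈ nb G Q
      · rw [ind_pos hvQ]
        omega
      · rw [nd_not_nb hvQ] at h1
        omega
    · intro i hi n hn
      rw [show 1 + 1 * i + n = n + (i + 1) by ring]
      refine glue' (D2 := Q) (T := Q) hdis hCD hQD hn (fun _ _ h => h) ?_
      intro e he
      exact (cliq i Q e hQ.2.1 he (by omega)).symm.mono (fun _ h => h) (fun _ _ h => h)
        (fun v hv _ => hQB v hv)

end Cex

end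

end CyclesAP

namespace CyclesAP

noncomputable section

open scoped Classical
open Finset

variable {V : Type*} {G : SimpleGraph V}

/-! ### Cores -/

/-- If `W ⊆ C` is attached at `v` only, paths in `W` ending next to `v` continue through `C`. -/
lemma bad_ext {C W : Finset V} {B' : Set V} {v : V} (hC : Cn G C)
    (hv : bd G C W = {v}) (hCB : Meets C B') (hWB : ¬ Meets W B') :
    ∃ m, HasP G (C \ W) {v} B' m := by
  have hvC := mem_bd.1 (show v ∈ bd G C W by simp [hv])
  obtain ⟨b, hb, hbB⟩ := hCB
  exact (hC.sdiff hv).path' (A := {v}) (B := B') ⟨v, mem_sdiff.2 ⟨hvC.1, hvC.2.1⟩, rfl⟩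
    ⟨b, mem_sdiff.2 ⟨hb, fun h => hWB ⟨b, h, hbB⟩⟩, hbB⟩

lemma bad_ext' {C W : Finset V} {A' B' : Set V} {v : V} {n m : ℕ} (hW : W ⊆ C)
    (hn : HasP G W A' (nb G {v}) n) (hm : HasP G (C \ W) {v} B' m) : HasP G C A' B' (n + m) := by
  refine glue' (T := {v}) disjoint_sdiff hW sdiff_subset hn (fun _ _ h => h) ?_
  intro e he
  rw [mem_singleton] at he
  subst he
  exact hm

namespace Cex

variable {D : Finset V} {A B : Set V} {k : ℕ}

/-- The induction step for a core `H` in which the vertices of the exit set `E ⊆ H` are reached from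
the root `x` in `q` ways. -/
lemma core_close (h : Cex G D A B k) {Z H E : Finset V} {B' : Set V} {q : ℕ} (a d c : ℕ)
    (hZ : Z ⊆ D) (hH : H ⊆ D) (hdis : Disjoint Z H) (hE : E ⊆ H) (hEne : E.Nonempty)
    (hne : Z.Nonempty) (hc : Conn G Z (nb G E) B') (hq : 1 ≤ q) (hd : d = 1 ∨ d = 2)
    (hloss : ∀ v ∈ Z, nd G D v + ind (v ∈ A) + ind (v ∈ B) + 1 ≤
      nd G Z v + ind (v ∈ nb G E) + ind (v ∈ B') + q)
    (hcore : ∀ i < q, ∀ e ∈ E, HasP G H A {e} (a + d * i))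
    (hp : ∀ n, HasP G Z (nb G E) B' n → HasP G (D \ H) (nb G E) B (n + c)) : False := by
  obtain ⟨e, he⟩ := hEne
  refine h.close (a + c) d hZ (ne_of_disjoint (hE he) (hH (hE he)) hdis) hne hc hq hd hloss ?_
  intro i hi n hn
  rw [show a + c + d * i + n = a + d * i + (n + c) by ring]
  exact glue disjoint_sdiff hH sdiff_subset (hp n hn) (fun _ _ h => h) (hcore i hi)

/-! ### Two neighbours of a root with adjacent common neighbours -/

/-- The core consists of two neighbours `t1`, `t2` of the root and a maximum clique `Q`
(with at least two vertices) among their common neighbours. -/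
structure IIaCore (G : SimpleGraph V) (D : Finset V) (A : Set V) (t1 t2 : V)
    (Q : Finset V) : Prop where
  h1D : t1 ∈ D
  h2D : t2 ∈ D
  h1A : t1 ∈ A
  h2A : t2 ∈ A
  hne : t1 ≠ t2
  hQ : MaxClq G (D.filter fun v => G.Adj t1 v ∧ G.Adj t2 v) Q
  hQ2 : 2 ≤ #Q

namespace IIaCore

variable {t1 t2 : V} {Q : Finset V}

lemma swap (hc : IIaCore G D A t1 t2 Q) : IIaCore G D A t2 t1 Q where
  h1D := hc.h2D
  h2D := hc.h1D
  h1A := hc.h2A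
  h2A := hc.h1A
  hne := hc.hne.symm
  hQ := by
    have := hc.hQ
    simp only [and_comm] at this ⊢
    exact this
  hQ2 := hc.hQ2

lemma adj (hc : IIaCore G D A t1 t2 Q) {q : V} (hq : q ∈ Q) : G.Adj t1 q ∧ G.Adj t2 q :=
  (mem_filter.1 (hc.hQ.1 hq)).2

lemma QD (hc : IIaCore G D A t1 t2 Q) : Q ⊆ D := hc.hQ.1.trans (filter_subset _ _)

lemma HD (hc : IIaCore G D A t1 t2 Q) : {t1, t2} ∪ Q ⊆ D := by
  refine union_subset ?_ hc.QD
  exact insert_subset hc.h1D (by simpa using hc.h2D)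

lemma not_mem (hc : IIaCore G D A t1 t2 Q) : t1 ∉ Q ∧ t2 ∉ Q :=
  ⟨fun h => (hc.adj h).1.ne rfl, fun h => (hc.adj h).2.ne rfl⟩

lemma path_q (hc : IIaCore G D A t1 t2 Q) {i : ℕ} (hi : i < #Q + 1) {e : V} (he : e ∈ Q) :
    HasP G ({t1, t2} ∪ Q) A {e} (2 + 1 * i) := by
  have hn := hc.not_mem
  rcases Nat.lt_or_ge i #Q with hi' | hi'
  · rw [show 2 + 1 * i = 1 + (i + 1) by ring]
    refine HasP.append (e := t1) (D1 := {t1}) (D2 := Q) (by simpa using hn.1) (by simp)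
      subset_union_right (HasP.single (by simp) hc.h1A rfl) ?_
    refine (cliq i Q e hc.hQ.2.1 he hi').mono (fun _ h => h) ?_ (fun _ _ h => h)
    intro v hv _
    exact mem_nb_singleton.2 (hc.adj hv).1
  · have h2 := hc.hQ2
    obtain ⟨q, hq, hqe⟩ := exists_mem_ne (show 1 < #Q by omega) e
    have hcd := card_erase_of_mem hq
    have h3 : HasP G {t1, q} A {q} (1 + 1) := by
      refine HasP.append (e := t1) (D1 := {t1}) (D2 := {q}) ?_ (by simp) (by simp)
        (HasP.single (by simp) hc.h1A rfl) (HasP.single (by simp) ?_ rfl)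
      · simpa using (hc.adj hq).1.ne
      · exact mem_nb_singleton.2 (hc.adj hq).1
    have h4 : HasP G (insert t2 {t1, q}) A {t2} (1 + 1 + 1) := by
      refine HasP.append (e := q) (D1 := {t1, q}) (D2 := {t2}) ?_ (subset_insert _ _) (by simp)
        h3 (HasP.single (by simp) ?_ rfl)
      · simpa using ⟨hc.hne.symm, (hc.adj hq).2.ne⟩
      · exact mem_nb_singleton.2 (hc.adj hq).2.symm
    rw [show 2 + 1 * i = 1 + 1 + 1 + ((#Q - 2) + 1) by omega]
    refine HasP.append (e := t2) (D1 := insert t2 {t1, q}) (D2 := Q.erase q) ?_ ?_ ?_ h4 ?_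
    · rw [Finset.disjoint_left]
      intro x hx hx'
      rw [mem_erase] at hx'
      simp only [mem_insert, mem_singleton] at hx
      rcases hx with rfl | rfl | rfl
      · exact hn.2 hx'.2
      · exact hn.1 hx'.2
      · exact hx'.1 rfl
    · intro x hx
      simp only [mem_insert, mem_singleton] at hx
      rcases hx with rfl | rfl | rfl <;> simp [hq]
    · exact (erase_subset _ _).trans subset_union_right
    · refine (cliq (#Q - 2) (Q.erase q) e (hc.hQ.2.1.mono (erase_subset _ _))
        (mem_erase.2 ⟨hqe.symm, he⟩) (by omega)).mono (fun _ h => h) ?_ (fun _ _ h => h)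
      intro v hv _
      exact mem_nb_singleton.2 (hc.adj (mem_of_mem_erase hv)).2

lemma path_t2 (hc : IIaCore G D A t1 t2 Q) {i : ℕ} (hi : i < #Q) :
    HasP G ({t1, t2} ∪ Q) A {t2} (3 + 1 * i) := by
  have hn := hc.not_mem
  obtain ⟨q, hq⟩ : Q.Nonempty := by rw [← card_pos]; omega
  have h1 : HasP G ({t1} ∪ Q) A {q} (1 + (i + 1)) := by
    refine HasP.append (e := t1) (D1 := {t1}) (D2 := Q) (by simpa using hn.1) (by simp)
      subset_union_right (HasP.single (by simp) hc.h1A rfl) ?_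
    refine (cliq i Q q hc.hQ.2.1 hq hi).mono (fun _ h => h) ?_ (fun _ _ h => h)
    intro v hv _
    exact mem_nb_singleton.2 (hc.adj hv).1
  rw [show 3 + 1 * i = 1 + (i + 1) + 1 by ring]
  refine HasP.append (e := q) (D1 := {t1} ∪ Q) (D2 := {t2}) ?_ ?_ (by simp) h1
    (HasP.single (by simp) (mem_nb_singleton.2 (hc.adj hq).2.symm) rfl)
  · simpa using ⟨hc.hne.symm, hn.2⟩
  · exact union_subset_union (by simp) (fun _ h => h)

lemma path_t (hc : IIaCore G D A t1 t2 Q) {i : ℕ} (hi : i < #Q) {e : V}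
    (he : e ∈ ({t1, t2} : Finset V)) : HasP G ({t1, t2} ∪ Q) A {e} (3 + 1 * i) := by
  simp only [mem_insert, mem_singleton] at he
  rcases he with rfl | rfl
  · have := hc.swap.path_t2 hi
    rwa [pair_comm] at this
  · exact hc.path_t2 hi

end IIaCore

/-- A vertex adjacent to `T ⊆ A ∩ D` is not in `A`. -/
lemma not_mem_of_nb (h : Cex G D A B k) {T : Finset V} (hTD : T ⊆ D) (hTA : ∀ t ∈ T, t ∈ A) {v : V}
    (hv : v ∈ D) (hvT : v ∈ nb G T) : v ∉ A := by
  obtain ⟨t, ht, htv⟩ := hvT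
  exact fun hvA => h.caseI (hTD ht) hv (hTA t ht) hvA htv

section IIa

variable {t1 t2 : V} {Q : Finset V}

/-- A part that is joined to the core at `t1` and `t2` only. -/
lemma IIa_T (h : Cex G D A B k) (hc : IIaCore G D A t1 t2 Q) {Z F : Finset V} {B' : Set V} {c : ℕ}
    (hZ : Z ⊆ D) (hZc : Cn G Z) (hdis : Disjoint Z ({t1, t2} ∪ Q)) (hb : bd G D Z ⊆ {t1, t2} ∪ F)
    (hT : Meets Z (nb G {t1, t2})) (hB' : Meets Z B')
    (hF : ∀ u ∈ F, ∀ w ∈ Z, G.Adj w u → w ∈ B') (hBB' : ∀ w ∈ Z, w ∈ B → w ∈ B')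
    (hloss : ∀ w ∈ Z, nd G F w + ind (w ∈ B) ≤ ind (w ∈ B'))
    (hp : ∀ n, HasP G Z (nb G {t1, t2}) B' n →
      HasP G (D \ ({t1, t2} ∪ Q)) (nb G {t1, t2}) B (n + c)) : False := by
  have hTD : {t1, t2} ⊆ D := subset_union_left.trans hc.HD
  refine h.core_close (H := {t1, t2} ∪ Q) (E := {t1, t2}) 3 1 c hZ hc.HD hdis subset_union_left
    (by simp) hZc.1 ?_ (show 1 ≤ #Q by have := hc.hQ2; omega) (Or.inl rfl) ?_
    (fun i hi e he => hc.path_t hi he) hp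
  · refine h.conn_part hZ ?_ hZc hb hT hB' ?_ (fun w hw hwB => Or.inr (hBB' w hw hwB))
    · exact ne_of_disjoint (u := t1) (by simp) hc.h1D hdis
    · intro u hu w hw hwu
      rcases mem_union.1 hu with hu | hu
      · exact Or.inl ⟨u, hu, hwu.symm⟩
      · exact Or.inr (hF u hu w hw hwu)
  · intro v hv
    have h1 := nd_split hv hb
    have h2 := nd_union_le (G := G) {t1, t2} F v
    have h3 := hloss v hv
    have h4 := hc.hQ2
    by_cases hvT : v ∈ nb G {t1, t2}
    · have h5 := h.not_mem_of_nb hTD (by simp [hc.h1A, hc.h2A]) (hZ hv) hvT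
      have h6 := nd_le_card (G := G) {t1, t2} v
      rw [card_pair hc.hne] at h6
      rw [ind_pos hvT, ind_neg h5]
      omega
    · rw [nd_not_nb hvT] at h2
      have h5 := ind_le (v ∈ A)
      omega

/-- The second root has no neighbours outside the core. -/
lemma IIa_main (h : Cex G D A B k) (hc : IIaCore G D A t1 t2 Q) {b : V} (hbD : b ∈ D) (hb : b ∈ B)
    (hbH : b ∉ {t1, t2} ∪ Q) : False := by
  have hTD : {t1, t2} ⊆ D := subset_union_left.trans hc.HD
  have hTA : ∀ t ∈ ({t1, t2} : Finset V), t ∈ A := by simp [hc.h1A, hc.h2A]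
  have hQ2 := hc.hQ2
  obtain ⟨C, hCD, hbC, hdis, hC, hbd⟩ := comp_off (G := G) hbD hbH
  have hCB : Meets C B := ⟨b, hbC, hb⟩
  have hCne : C ≠ D := ne_of_disjoint (u := t1) (by simp) hc.h1D hdis
  have hCDH : C ⊆ D \ ({t1, t2} ∪ Q) := fun x hx =>
    mem_sdiff.2 ⟨hCD hx, Finset.disjoint_left.1 hdis hx⟩
  by_cases hCQ : Meets C (nb G Q)
  · refine h.core_close (H := {t1, t2} ∪ Q) (E := Q) (B' := B) 2 1 0 hCD hc.HD hdis
      subset_union_right (by rw [← card_pos]; omega) hC.1 ?_ (show 1 ≤ #Q + 1 by omega)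
      (Or.inl rfl) ?_ (fun i hi e he => hc.path_q hi he)
      (fun n hn => hn.mono hCDH (fun _ _ h => h) (fun _ _ h => h))
    · refine conn_of hC hCQ hCB ?_
      intro W hW hWc v hv hWQ hWB
      have h1 : bd G D W ⊆ {t1, t2} ∪ {v} := by
        refine (bd_bad hW hbd hv hWQ).trans ?_
        intro x hx
        rw [mem_insert, mem_sdiff, mem_union] at hx
        rw [mem_union, mem_singleton]
        tauto
      have hvC := mem_bd.1 (show v ∈ bd G C W by simp [hv])
      have h2 := h.claimA (hW.trans hCD)
        (ne_of_disjoint (u := t1) (by simp) hc.h1D (disjoint_of_subset_left hW hdis)) hWc.1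
      rw [ind_neg hWB] at h2
      obtain ⟨u, hu, huv⟩ := exists_mem_ne (show 1 < #(bd G D W) by omega) v
      have huT : u ∈ ({t1, t2} : Finset V) := by
        have := h1 hu
        simp only [mem_union, mem_singleton] at this ⊢
        tauto
      obtain ⟨m, hm⟩ := bad_ext hC hv hCB hWB
      obtain ⟨w, hw, hwv⟩ := hvC.2.2
      refine h.IIa_T hc (B' := nb G {v}) (c := m) (hW.trans hCD) hWc
        (disjoint_of_subset_left hW hdis) h1 (meets_nb_of_bd hu huT)
        ⟨w, hw, mem_nb_singleton.2 hwv.symm⟩ ?_ ?_ ?_ ?_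
      · intro u hu w _ hwu
        exact ⟨u, hu, hwu.symm⟩
      · exact fun w hw hwB => absurd ⟨w, hw, hwB⟩ hWB
      · intro w hw
        rw [nd_singleton, ind_neg fun hwB => hWB ⟨w, hw, hwB⟩, add_zero]
      · intro n hn
        exact (bad_ext' hW hn hm).mono hCDH (fun _ _ h => h) (fun _ _ h => h)
    · intro v hv
      have h1 := nd_split hv hbd
      have h2 := nd_union_le (G := G) {t1, t2} Q v
      have h3 := nd_le_card (G := G) Q v
      have h4 := nd_le_card (G := G) {t1, t2} v
      rw [card_pair hc.hne] at h4
      have h5 : nd G {t1, t2} v = 0 ∨ v ∉ A := by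
        by_cases hvT : v ∈ nb G {t1, t2}
        · exact Or.inr (h.not_mem_of_nb hTD hTA (hCD hv) hvT)
        · exact Or.inl (nd_not_nb hvT)
      have h6 := ind_le (v ∈ A)
      by_cases hvQ : v ∈ nb G Q
      · rw [ind_pos hvQ]
        rcases h5 with h5 | h5
        · omega
        · rw [ind_neg h5]
          by_cases h7 : nd G {t1, t2} v = 2
          · have h8 := nd_eq_card (G := G) (X := {t1, t2}) (v := v)
              (by rw [card_pair hc.hne]; omega)
            have h9 := hc.hQ.nd_lt (v := v) (mem_filter.2 ⟨hCD hv,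
              (h8 t1 (by simp)).symm, (h8 t2 (by simp)).symm⟩)
              (fun hvQ => Finset.disjoint_left.1 hdis hv (mem_union_right _ hvQ))
            omega
          · omega
      · rw [nd_not_nb hvQ] at h2
        rcases h5 with h5 | h5
        · omega
        · rw [ind_neg h5]
          omega
  · have h1 : bd G D C ⊆ {t1, t2} := by
      intro u hu
      have h2 := not_mem_of_bd hu hCQ
      have h3 := hbd hu
      rw [mem_union] at h3
      tauto
    obtain ⟨u, hu⟩ := h.bd_nonempty hCD hCne hC.1
    refine h.IIa_T hc (F := ∅) (B' := B) (c := 0) hCD hC hdis (by simpa using h1)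
      (meets_nb_of_bd hu (h1 hu)) hCB (by simp) (fun _ _ h => h) ?_
      (fun n hn => hn.mono hCDH (fun _ _ h => h) (fun _ _ h => h))
    intro w hw
    rw [nd_eq_zero (by simp), zero_add]

/-- The common neighbours of two neighbours of a root are pairwise nonadjacent. -/
lemma caseIIa (h : Cex G D A B k) {q1 q2 : V} (h1D : t1 ∈ D) (h2D : t2 ∈ D) (h1A : t1 ∈ A)
    (h2A : t2 ∈ A) (hne : t1 ≠ t2) (hq1 : q1 ∈ D) (hq2 : q2 ∈ D) (h12 : G.Adj q1 q2)
    (h11 : G.Adj t1 q1) (h21 : G.Adj t2 q1) (h1q2 : G.Adj t1 q2) (h2q2 : G.Adj t2 q2) : False := by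
  obtain ⟨Q, hQ, hQ2⟩ := exists_maxClq (X := D.filter fun v => G.Adj t1 v ∧ G.Adj t2 v)
    (mem_filter.2 ⟨hq1, h11, h21⟩) (mem_filter.2 ⟨hq2, h1q2, h2q2⟩) h12
  have hc : IIaCore G D A t1 t2 Q := ⟨h1D, h2D, h1A, h2A, hne, hQ, hQ2⟩
  have hBH : ∀ b ∈ D, b ∈ B → b ∈ {t1, t2} ∪ Q := by
    intro b hbD hb
    by_contra hbH
    exact h.IIa_main hc hbD hb hbH
  have hBT : ∀ b ∈ D, b ∈ B → b ∈ ({t1, t2} : Finset V) := by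
    intro b hbD hb
    rcases mem_union.1 (hBH b hbD hb) with h' | h'
    · exact h'
    · exfalso
      obtain ⟨b', hb'D, hb', hbb'⟩ := h.two_le b
      refine h.symm.caseI hbD hb'D hb hb' ?_
      rcases mem_union.1 (hBH b' hb'D hb') with h'' | h''
      · simp only [mem_insert, mem_singleton] at h''
        rcases h'' with rfl | rfl
        · exact (hc.adj h').1.symm
        · exact (hc.adj h').2.symm
      · exact hQ.2.1 b h' b' h'' hbb'.symm
  have h1B : t1 ∈ B := by
    obtain ⟨b, hbD, hb, hbt⟩ := h.two_le t2
    have := hBT b hbD hb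
    simp only [mem_insert, mem_singleton] at this
    rcases this with rfl | rfl
    · exact hb
    · exact absurd rfl hbt
  have h2B : t2 ∈ B := by
    obtain ⟨b, hbD, hb, hbt⟩ := h.two_le t1
    have := hBT b hbD hb
    simp only [mem_insert, mem_singleton] at this
    rcases this with rfl | rfl
    · exact absurd rfl hbt
    · exact hb
  have hc' : IIaCore G D B t1 t2 Q := ⟨h1D, h2D, h1B, h2B, hne, hQ, hQ2⟩
  have hAT : ∀ a ∈ D, a ∈ A → a ∈ ({t1, t2} : Finset V) := by
    intro a haD ha
    by_contra haT
    refine h.symm.IIa_main hc' haD ha ?_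
    rw [mem_union, not_or]
    exact ⟨haT, fun haQ => h.caseI h1D haD h1A ha (hc.adj haQ).1⟩
  have hTD : ({t1, t2} : Finset V) ⊆ D := subset_union_left.trans hc.HD
  obtain ⟨Z, hZD, hqZ, hdis, hZ, hbd⟩ := comp_off (G := G) (H := {t1, t2}) hq1
    (by simpa using ⟨h11.ne', h21.ne'⟩)
  have hZA : ∀ v ∈ Z, v ∉ A := fun v hv hvA =>
    Finset.disjoint_left.1 hdis hv (hAT v (hZD hv) hvA)
  have hZB : ∀ v ∈ Z, v ∉ B := fun v hv hvB =>
    Finset.disjoint_left.1 hdis hv (hBT v (hZD hv) hvB)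
  have hZT : t1 ∉ Z ∧ t2 ∉ Z := by
    rw [Finset.disjoint_right] at hdis
    exact ⟨hdis (by simp), hdis (by simp)⟩
  refine h.close (Z := Z) (A' := nb G {t1}) (B' := nb G {t2}) (q := 1) 2 1 hZD
    (ne_of_disjoint (u := t1) (by simp) h1D hdis) hZ.1 ?_ le_rfl (Or.inl rfl) ?_ ?_
  · refine h.conn_part hZD (ne_of_disjoint (u := t1) (by simp) h1D hdis) hZ hbd
      ⟨q1, hqZ, mem_nb_singleton.2 h11⟩ ⟨q1, hqZ, mem_nb_singleton.2 h21⟩ ?_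
      (fun w hw hwB => absurd hwB (hZB w hw))
    intro u hu w _ hwu
    simp only [mem_insert, mem_singleton] at hu
    rcases hu with rfl | rfl
    · exact Or.inl (mem_nb_singleton.2 hwu.symm)
    · exact Or.inr (mem_nb_singleton.2 hwu.symm)
  · intro v hv
    have h1 := nd_split hv hbd
    have h2 := nd_pair (G := G) t1 t2 v
    rw [ind_neg (hZA v hv), ind_neg (hZB v hv)]
    omega
  · intro i hi n hn
    obtain rfl : i = 0 := by omega
    have h1 : HasP G ({t1} ∪ Z) A (nb G {t2}) (1 + n) :=
      HasP.append (by simpa using hZT.1) subset_union_left subset_union_right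
        (HasP.single (by simp) h1A rfl) hn
    rw [show 2 + 1 * 0 + n = 1 + n + 1 by ring]
    refine glue' (D2 := {t2}) (T := {t2}) ?_ (union_subset (by simpa) hZD) (by simpa) h1
      (fun _ _ h => h) ?_
    · simpa using ⟨hne.symm, hZT.2⟩
    · intro e he
      rw [mem_singleton] at he
      subst he
      exact HasP.single (by simp) rfl h2B

end IIa

end Cex

end

end CyclesAP

namespace CyclesAP

noncomputable section

open scoped Classical
open Finset

variable {V : Type*} {G : SimpleGraph V}

namespace Cex

variable {D : Finset V} {A B : Set V} {k : ℕ}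

/-! ### A triangle at a neighbour of a root -/

/-- A part `W` of `C` that is attached at `v` and `s` only and meets `A` is traversed first, if at
least two suitable paths lead from `s` to `B` outside `W`. -/
lemma flip (h : Cex G D A B k) {C W : Finset V} {s v : V} {q a d : ℕ} (hCD : C ⊆ D)
    (hC : Cn G C) (hCB : Meets C B) (hsD : s ∈ D) (hsC : s ∉ C) (hW : W ⊆ C) (hWc : Cn G W)
    (hv : bd G C W = {v}) (hb : bd G D W ⊆ {v, s}) (hWA : Meets W A) (hWB : ¬ Meets W B)
    (hq : 2 ≤ q) (hd : d = 1 ∨ d = 2) (hp : ∀ i < q, HasP G (D \ W) {s} B (a + d * i)) :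
    False := by
  have hWD : W ⊆ D := hW.trans hCD
  have hWne : W ≠ D := fun h' => hsC (hW (h' ▸ hsD))
  obtain ⟨m, hm⟩ := bad_ext hC hv hCB hWB
  refine h.close (Z := W) (A' := A) (B' := nb G {s}) (q := q) a d hWD hWne hWc.1 ?_ (by omega) hd
    ?_ ?_
  · refine conn_of hWc hWA ?_ ?_
    · have h1 := h.claimA hWD hWne hWc.1
      rw [ind_neg hWB] at h1
      obtain ⟨u, hu, huv⟩ := exists_mem_ne (show 1 < #(bd G D W) by omega) v
      refine meets_nb_of_bd hu ?_
      have := hb hu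
      simp only [mem_insert, mem_singleton] at this ⊢
      tauto
    · intro X hX hXc u hu hXA hXs
      have hXB : ¬ Meets X B := fun h' => hWB (h'.mono hX)
      obtain ⟨n, hn⟩ := bad_ext hWc hu hWA hXA
      refine h.twocut (E1 := W \ X) (E2 := C \ W) (hX.trans hWD) hXc hXA hXB (u := u) (v := v) ?_
        (sdiff_subset.trans hWD) (sdiff_subset.trans hCD) sdiff_disjoint ?_ ?_ hn.symm hm
      · intro x hx
        have h1 := not_mem_of_bd hx hXs
        rcases bd_sub hX hb hx with h2 | h2
        · rw [hu, mem_singleton] at h2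
          simp [h2]
        · simp only [mem_insert, mem_singleton] at h1 h2 ⊢
          tauto
      · exact disjoint_of_subset_right hX sdiff_disjoint
      · exact disjoint_of_subset_left sdiff_subset disjoint_sdiff
  · intro w hw
    have h1 := nd_split hw hb
    have h2 := nd_pair (G := G) v s w
    have h3 := ind_le (w ∈ nb G {v})
    rw [ind_neg fun h' => hWB ⟨w, hw, h'⟩]
    omega
  · intro i hi n hn
    rw [add_comm]
    refine glue' (T := {s}) disjoint_sdiff hWD sdiff_subset hn (fun _ _ h => h) ?_
    intro e he
    rw [mem_singleton] at he
    subst he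
    exact hp i hi

/-- No triangle in `D` contains a neighbour of a root. -/
lemma caseIIb (h : Cex G D A B k) {t q1 q2 : V} (htD : t ∈ D) (htA : t ∈ A) (h1D : q1 ∈ D)
    (h2D : q2 ∈ D) (h12 : G.Adj q1 q2) (h1 : G.Adj t q1) (h2 : G.Adj t q2) : False := by
  obtain ⟨Q, hQ, hQ2⟩ := exists_maxClq (X := D.filter (G.Adj t))
    (mem_filter.2 ⟨h1D, h1⟩) (mem_filter.2 ⟨h2D, h2⟩) h12
  have hQD : Q ⊆ D := hQ.1.trans (filter_subset _ _)
  have hQt : ∀ q ∈ Q, G.Adj t q := fun q hq => (mem_filter.1 (hQ.1 hq)).2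
  have hH : Clq G (insert t Q) := hQ.2.1.insert hQt
  have hHD : insert t Q ⊆ D := insert_subset htD hQD
  have htQ : t ∉ Q := fun h' => (hQt t h').ne rfl
  obtain ⟨b, hbD, hb, hbH⟩ : ∃ b ∈ D, b ∈ B ∧ b ∉ insert t Q := by
    by_contra hcon
    push Not at hcon
    obtain ⟨b, hbD, hb⟩ := h.symm.meets_A
    obtain ⟨b', hb'D, hb', hbb'⟩ := h.two_le b
    exact h.symm.caseI hbD hb'D hb hb' (hH b (hcon b hbD hb) b' (hcon b' hb'D hb') hbb'.symm)
  obtain ⟨C, hCD, hbC, hdis, hC, hbd⟩ := comp_off (G := G) hbD hbH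
  have hCB : Meets C B := ⟨b, hbC, hb⟩
  have hCH : ∀ v ∈ C, v ∉ insert t Q := fun v hv => Finset.disjoint_left.1 hdis hv
  have htC : t ∉ C := fun h' => hCH t h' (mem_insert_self _ _)
  have hCQ' : ∀ v ∈ C, v ∉ Q := fun v hv hvQ => hCH v hv (mem_insert_of_mem hvQ)
  have hCne : C ≠ D := fun h' => htC (h' ▸ htD)
  have hCQ : Meets C (nb G Q) := by
    by_contra hCQ
    have h3 : bd G D C ⊆ {t} := by
      intro u hu
      have h4 := not_mem_of_bd hu hCQ
      have h5 := hbd hu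
      rw [mem_insert] at h5
      rw [mem_singleton]
      tauto
    have h4 := h.claimC hCD hC.1 ((card_le_card h3).trans_eq (card_singleton t))
    obtain ⟨q, hq⟩ : Q.Nonempty := by rw [← card_pos]; omega
    rcases mem_union.1 (h4 (hQD hq)) with h5 | h5
    · exact hCQ' q h5 hq
    · have := h3 h5
      rw [mem_singleton] at this
      exact htQ (this ▸ hq)
  have hpath : ∀ i < #Q, ∀ e ∈ Q, HasP G (insert t Q) {t} {e} (2 + 1 * i) := by
    intro i hi e he
    rw [show 2 + 1 * i = 1 + (i + 1) by ring]
    refine HasP.append (e := t) (D1 := {t}) (D2 := Q) (by simpa using htQ) (by simp)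
      (subset_insert _ _) (HasP.single (by simp) rfl rfl) ?_
    refine (cliq i Q e hQ.2.1 he hi).mono (fun _ h => h) ?_ (fun _ _ h => h)
    intro v hv _
    exact mem_nb_singleton.2 (hQt v hv)
  refine h.core_close (H := insert t Q) (E := Q) (B' := B) (q := #Q) 2 1 0 hCD hHD hdis
    (subset_insert _ _) (by rw [← card_pos]; omega) hC.1 ?_ (by omega) (Or.inl rfl) ?_ ?_ ?_
  · refine conn_of hC hCQ hCB ?_
    intro W hW hWc v hv hWQ hWB
    have h3 : bd G D W ⊆ {t, v} := by
      refine (bd_bad hW hbd hv hWQ).trans ?_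
      intro x hx
      rw [mem_insert, mem_sdiff, mem_insert] at hx
      simp only [mem_insert, mem_singleton]
      tauto
    by_cases hWA : Meets W A
    · obtain ⟨w, hw, q, hq, hqw⟩ := hCQ
      have hvC := mem_bd.1 (show v ∈ bd G C W by simp [hv])
      obtain ⟨c, hc⟩ : ∃ c, HasP G (C \ W) (nb G {q}) B c := by
        refine (hC.sdiff hv).path' ?_ ?_
        · exact ⟨w, mem_sdiff.2 ⟨hw, fun h' => hWQ ⟨w, h', q, hq, hqw⟩⟩, mem_nb_singleton.2 hqw⟩
        · exact ⟨b, mem_sdiff.2 ⟨hbC, fun h' => hWB ⟨b, h', hb⟩⟩, hb⟩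
      refine h.flip (s := t) (q := #Q) (a := 2 + c) (d := 1) hCD hC hCB htD htC hW hWc hv
        (by rwa [pair_comm]) hWA hWB hQ2 (Or.inl rfl) ?_
      intro i hi
      rw [show 2 + c + 1 * i = 2 + 1 * i + c by ring]
      refine HasP.append ?_ ?_ ?_ (hpath i hi q hq) hc
      · exact disjoint_of_subset_right sdiff_subset hdis.symm
      · intro x hx
        exact mem_sdiff.2 ⟨hHD hx, fun h' => hCH x (hW h') hx⟩
      · exact sdiff_subset_sdiff hCD (fun _ h => h)
    · obtain ⟨m, hm⟩ := bad_ext hC hv hCB hWB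
      refine h.twocut (E1 := {t}) (E2 := C \ W) (hW.trans hCD) hWc hWA hWB h3 (by simpa)
        (sdiff_subset.trans hCD) ?_ sdiff_disjoint ?_ (HasP.single (by simp) htA rfl) hm
      · simpa using fun h' => htC (hW h')
      · simp [htC]
  · intro v hv
    have h3 := nd_split hv hbd
    have h4 := nd_le_card (G := G) Q v
    have h5 : v ∈ A → nd G Q v ≤ 1 := by
      intro hvA
      by_contra hcon
      obtain ⟨x, hx, y, hy, hxy, hvx, hvy⟩ := exists_two (G := G) (X := Q) (v := v) (by omega)
      exact h.caseIIa htD (hCD hv) htA hvA (fun h' => htC (h' ▸ hv)) (hQD hx) (hQD hy)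
        (hQ.2.1 x hx y hy hxy) (hQt x hx) hvx (hQt y hy) hvy
    have h6 : nd G (insert t Q) v ≤ nd G Q v + ind (G.Adj v t) := by
      by_cases hvt : G.Adj v t
      · rw [nd_insert htQ hvt, ind_pos hvt]
      · rw [nd_insert' hvt]; omega
    by_cases hvt : G.Adj v t
    · have h7 : v ∉ A := fun hvA => h.caseI (hCD hv) htD hvA htA hvt
      have h8 := hQ.nd_lt (mem_filter.2 ⟨hCD hv, hvt.symm⟩) (hCQ' v hv)
      rw [ind_pos hvt] at h6
      rw [ind_neg h7]
      by_cases hvQ : v ∈ nb G Q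
      · rw [ind_pos hvQ]
        omega
      · rw [nd_not_nb hvQ] at h6
        omega
    · rw [ind_neg hvt] at h6
      have h9 := ind_le (v ∈ A)
      by_cases hvQ : v ∈ nb G Q
      · rw [ind_pos hvQ]
        by_cases hvA : v ∈ A
        · have := h5 hvA
          omega
        · rw [ind_neg hvA]
          omega
      · rw [nd_not_nb hvQ] at h6
        omega
  · intro i hi e he
    refine (hpath i hi e he).mono (fun _ h => h) ?_ (fun _ _ h => h)
    rintro v - rfl
    exact htA
  · intro n hn
    exact hn.mono (fun x hx => mem_sdiff.2 ⟨hCD hx, hCH x hx⟩) (fun _ _ h => h) (fun _ _ h => h)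

end Cex

end

end CyclesAP

namespace CyclesAP

noncomputable section

open scoped Classical
open Finset

variable {V : Type*} {G : SimpleGraph V}

/-! ### Complete bipartite cores -/

/-- The union of two connected sets with an edge between them is connected. -/
lemma Cn.union {X Y : Finset V} {x y : V} (hX : Cn G X) (hY : Cn G Y) (hx : x ∈ X) (hy : y ∈ Y)
    (hxy : G.Adj x y) : Cn G (X ∪ Y) := by
  refine ⟨⟨x, mem_union_left _ hx⟩, ?_⟩
  intro W hW ⟨w, hw⟩ hb
  have hcl : ∀ a ∈ W, ∀ b ∈ X ∪ Y, G.Adj a b → b ∈ W := by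
    intro a ha b hb' hab
    by_contra hbW
    have : b ∈ bd G (X ∪ Y) W := mem_bd.2 ⟨hb', hbW, a, ha, hab⟩
    simp [hb] at this
  have key : ∀ Z ⊆ X ∪ Y, Cn G Z → (∃ z ∈ Z, z ∈ W) → Z ⊆ W := by
    rintro Z hZ hZc ⟨z, hz, hzW⟩
    have := hZc.2 (Z ∩ W) inter_subset_left ⟨z, mem_inter.2 ⟨hz, hzW⟩⟩ ?_
    · exact inter_eq_left.1 this
    · rw [Finset.eq_empty_iff_forall_notMem]
      intro u hu
      obtain ⟨h1, h2, a, ha, hau⟩ := mem_bd.1 hu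
      exact h2 (mem_inter.2 ⟨h1, hcl a (mem_inter.1 ha).2 u (hZ h1) hau⟩)
  have hXl : X ⊆ X ∪ Y := subset_union_left
  have hYr : Y ⊆ X ∪ Y := subset_union_right
  refine hW.antisymm (union_subset ?_ ?_)
  · rcases mem_union.1 (hW hw) with h | h
    · exact key X hXl hX ⟨w, h, hw⟩
    · have := key Y hYr hY ⟨w, h, hw⟩
      exact key X hXl hX ⟨x, hx, hcl y (this hy) x (hXl hx) hxy.symm⟩
  · rcases mem_union.1 (hW hw) with h | h
    · have := key X hXl hX ⟨w, h, hw⟩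
      exact key Y hYr hY ⟨y, hy, hcl x (this hx) y (hYr hy) hxy⟩
    · exact key Y hYr hY ⟨w, h, hw⟩

/-- A complete bipartite graph between `S ⊆ D` and a set `T ⊆ D` of neighbours of the root. -/
structure BCore (G : SimpleGraph V) (D : Finset V) (A : Set V) (S T : Finset V) : Prop where
  SD : S ⊆ D
  TD : T ⊆ D
  TA : ∀ t ∈ T, t ∈ A
  adj : ∀ s ∈ S, ∀ t ∈ T, G.Adj s t

namespace BCore

variable {D S T : Finset V} {A : Set V}

lemma disj (hc : BCore G D A S T) : Disjoint S T :=
  Finset.disjoint_left.2 fun x hS hT => (hc.adj x hS x hT).ne rfl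

lemma HD (hc : BCore G D A S T) : S ∪ T ⊆ D := union_subset hc.SD hc.TD

end BCore

namespace Cex

variable {D : Finset V} {A B : Set V} {k : ℕ} {S T : Finset V}

/-- As there are no triangles at neighbours of the root, a vertex adjacent to `T` is not adjacent
to `S`. -/
lemma nd_S (h : Cex G D A B k) (hc : BCore G D A S T) {v : V} (hv : v ∈ D) (hvT : v ∈ nb G T) :
    nd G S v = 0 := by
  obtain ⟨t, ht, htv⟩ := hvT
  refine nd_eq_zero fun s hs hvs => ?_
  exact h.caseIIb (hc.TD ht) (hc.TA t ht) hv (hc.SD hs) hvs htv (hc.adj s hs t ht).symm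

/-- A part that is joined to the core at `S` only. -/
lemma bip_S (h : Cex G D A B k) (hc : BCore G D A S T) (hcard : #S ≤ #T) {Z F : Finset V}
    {B' : Set V} {c : ℕ} (hZ : Z ⊆ D) (hZc : Cn G Z) (hdis : Disjoint Z (S ∪ T))
    (hb : bd G D Z ⊆ S ∪ F) (hS : Meets Z (nb G S)) (hB' : Meets Z B')
    (hF : ∀ u ∈ F, ∀ w ∈ Z, G.Adj w u → w ∈ B') (hBB' : ∀ w ∈ Z, w ∈ B → w ∈ B')
    (hloss : ∀ w ∈ Z, nd G F w + ind (w ∈ B) ≤ ind (w ∈ B'))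
    (hA : ∀ w ∈ Z, w ∈ A → nd G S w + 1 ≤ #S ∧ 2 ≤ #S)
    (hp : ∀ n, HasP G Z (nb G S) B' n → HasP G (D \ (S ∪ T)) (nb G S) B (n + c)) : False := by
  obtain ⟨s, hs⟩ : S.Nonempty := by
    obtain ⟨w, -, s, hs, -⟩ := hS
    exact ⟨s, hs⟩
  have hS1 : 1 ≤ #S := card_pos.2 ⟨s, hs⟩
  refine h.core_close (H := S ∪ T) (E := S) 2 2 c hZ hc.HD hdis subset_union_left ⟨s, hs⟩
    hZc.1 ?_ hS1 (Or.inr rfl) ?_ ?_ hp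
  · refine h.conn_part hZ ?_ hZc hb hS hB' ?_ (fun w hw hwB => Or.inr (hBB' w hw hwB))
    · exact ne_of_disjoint (mem_union_left _ hs) (hc.SD hs) hdis
    · intro u hu w hw hwu
      rcases mem_union.1 hu with hu | hu
      · exact Or.inl ⟨u, hu, hwu.symm⟩
      · exact Or.inr (hF u hu w hw hwu)
  · intro v hv
    have h1 := nd_split hv hb
    have h2 := nd_union_le (G := G) S F v
    have h3 := hloss v hv
    have h4 := nd_le_card (G := G) S v
    by_cases hvS : v ∈ nb G S
    · rw [ind_pos hvS]
      by_cases hvA : v ∈ A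
      · have h5 := hA v hv hvA
        rw [ind_pos hvA]
        omega
      · rw [ind_neg hvA]
        omega
    · rw [nd_not_nb hvS] at h2
      by_cases hvA : v ∈ A
      · have h5 := hA v hv hvA
        rw [ind_pos hvA]
        omega
      · rw [ind_neg hvA]
        omega
  · intro i hi e he
    rw [add_comm]
    exact (bip' hc.disj hc.adj he hi (by omega)).mono (fun _ h => h) (fun v _ => hc.TA v)
      (fun _ _ h => h)

/-- A part that is joined to `T`. -/
lemma bip_T (h : Cex G D A B k) (hc : BCore G D A S T) (hcard : #S + 1 ≤ #T) {Z F : Finset V}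
    {B' : Set V} {c : ℕ} (hZ : Z ⊆ D) (hZc : Cn G Z) (hdis : Disjoint Z (S ∪ T))
    (hb : bd G D Z ⊆ (S ∪ T) ∪ F) (hT : Meets Z (nb G T)) (hB' : Meets Z B')
    (hloss : ∀ w ∈ Z, nd G F w + ind (w ∈ B) ≤ ind (w ∈ B'))
    (hnd : ∀ w ∈ Z, nd G T w ≤ #S + 1) (hA : ∀ w ∈ Z, w ∈ A → nd G S w + 1 ≤ #S)
    (hbad : ∀ W ⊆ Z, Cn G W → ∀ v, bd G Z W = {v} → ¬ Meets W (nb G T) → ¬ Meets W B' → False)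
    (hp : ∀ n, HasP G Z (nb G T) B' n → HasP G (D \ (S ∪ T)) (nb G T) B (n + c)) : False := by
  refine h.core_close (H := S ∪ T) (E := T) 1 2 c hZ hc.HD hdis subset_union_right
    (by rw [← card_pos]; omega) hZc.1 (conn_of hZc hT hB' hbad) (show 1 ≤ #S + 1 by omega)
    (Or.inr rfl) ?_ ?_ hp
  · intro v hv
    have h1 := nd_split hv hb
    have h2 := nd_union_le (G := G) (S ∪ T) F v
    have h2' := nd_union_le (G := G) S T v
    have h3 := hloss v hv
    have h4 := nd_le_card (G := G) S v
    by_cases hvT : v ∈ nb G T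
    · have h5 := h.nd_S hc (hZ hv) hvT
      have h6 := hnd v hv
      rw [ind_pos hvT, ind_neg (h.not_mem_of_nb hc.TD hc.TA (hZ hv) hvT)]
      omega
    · rw [nd_not_nb hvT] at h2'
      by_cases hvA : v ∈ A
      · have h5 := hA v hv hvA
        rw [ind_pos hvA]
        omega
      · rw [ind_neg hvA]
        omega
  · intro i hi e he
    rw [add_comm]
    exact (bip i S T e hc.disj hc.adj he (by omega) (by omega)).mono (fun _ h => h)
      (fun v _ => hc.TA v) (fun _ _ h => h)

/-- A core with `|T| > |S|` in which `S` has maximum size and `T` consists of all suitable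
vertices. -/
structure MaxCore (G : SimpleGraph V) (D : Finset V) (A : Set V) (S T : Finset V) : Prop
    extends BCore G D A S T where
  full : ∀ t ∈ D, t ∈ A → (∀ s ∈ S, G.Adj s t) → t ∈ T
  card : #S + 1 ≤ #T
  max : ∀ S' T', BCore G D A S' T' → #S' + 1 ≤ #T' → #S' ≤ #S

lemma exists_maxCore (h : Cex G D A B k) : ∃ S T, MaxCore G D A S T := by
  let Tf : Finset V → Finset V := fun S => D.filter fun t => t ∈ A ∧ ∀ s ∈ S, G.Adj s t
  have hT : ∀ S ⊆ D, BCore G D A S (Tf S) := fun S hS =>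
    ⟨hS, filter_subset _ _, fun t ht => (mem_filter.1 ht).2.1,
      fun s hs t ht => (mem_filter.1 ht).2.2 s hs⟩
  obtain ⟨S, hS, hmax⟩ := exists_max_image (D.powerset.filter fun S => #S + 1 ≤ #(Tf S)) card
    ⟨∅, by
      rw [mem_filter]
      refine ⟨empty_mem_powerset _, ?_⟩
      obtain ⟨t, ht, htA⟩ := h.meets_A
      have : 0 < #(Tf ∅) := card_pos.2 ⟨t, mem_filter.2 ⟨ht, htA, by simp⟩⟩
      rw [card_empty]
      omega⟩
  rw [mem_filter, mem_powerset] at hS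
  refine ⟨S, Tf S, { toBCore := hT S hS.1, full := ?_, card := hS.2, max := ?_ }⟩
  · exact fun t ht htA hts => mem_filter.2 ⟨ht, htA, hts⟩
  · intro S' T' hc hcard
    refine hmax S' (mem_filter.2 ⟨mem_powerset.2 hc.SD, hcard.trans (card_le_card ?_)⟩)
    exact fun t ht => mem_filter.2 ⟨hc.TD ht, hc.TA t ht, fun s hs => hc.adj s hs t ht⟩

namespace MaxCore

lemma nd_T (hc : MaxCore G D A S T) {v : V} (hv : v ∈ D) (hvS : v ∉ S) : nd G T v ≤ #S + 1 := by
  by_contra hcon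
  have h1 : BCore G D A (insert v S) (T.filter (G.Adj v)) := by
    refine ⟨insert_subset hv hc.SD, (filter_subset _ _).trans hc.TD,
      fun t ht => hc.TA t (mem_filter.1 ht).1, ?_⟩
    intro s hs t ht
    rw [mem_filter] at ht
    rcases mem_insert.1 hs with rfl | hs
    · exact ht.2
    · exact hc.adj s hs t ht.1
  have h2 := card_insert_of_notMem hvS
  have h3 := hc.max _ _ h1 (by rw [h2]; unfold nd at hcon; omega)
  omega

lemma nd_lt (hc : MaxCore G D A S T) {v : V} (hv : v ∈ D) (hvT : v ∉ T) (hvA : v ∈ A) :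
    nd G S v + 1 ≤ #S := by
  by_contra hcon
  exact hvT (hc.full v hv hvA fun s hs => (nd_eq_card (by omega) s hs).symm)

end MaxCore

end Cex

end

end CyclesAP

namespace CyclesAP

noncomputable section

open scoped Classical
open Finset

variable {V : Type*} {G : SimpleGraph V}

namespace Cex

variable {D : Finset V} {A B : Set V} {k : ℕ} {S T : Finset V}

/-- The case `S = {s}` of a part `W` meeting `A` that is attached at `s` and at one more vertex
`v`: if `W` is chosen as large as possible, then the rest of `D` is rooted 2-connected between the
neighbours of `s` and `B`, and contains two suitable paths by `two_paths`. -/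
lemma bip_one (h : Cex G D A B k) {s : V} (hc : MaxCore G D A {s} T) {C W : Finset V} {v : V}
    (hCD : C ⊆ D) (hC : Cn G C) (hdis : Disjoint C ({s} ∪ T)) (hbd : bd G D C ⊆ {s} ∪ T)
    (hCB : Meets C B) (hW : W ⊆ C) (hWc : Cn G W) (hv : bd G C W = {v}) (hWT : ¬ Meets W (nb G T))
    (hWB : ¬ Meets W B) (hWA : Meets W A) : False := by
  -- the part is replaced by one of maximum size
  obtain ⟨W₀, hW₀, hmax⟩ := exists_max_image (C.powerset.filter fun X => Cn G X ∧
    ¬ Meets X (nb G T) ∧ ¬ Meets X B ∧ Meets X A ∧ ∃ u, bd G C X = {u}) card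
    ⟨W, mem_filter.2 ⟨mem_powerset.2 hW, hWc, hWT, hWB, hWA, v, hv⟩⟩
  clear hW hWc hv hWT hWB hWA
  clear v W
  rename' W₀ => W
  rw [mem_filter, mem_powerset] at hW₀
  obtain ⟨hW, hWc, hWT, hWB, hWA, v, hv⟩ := hW₀
  have hWD : W ⊆ D := hW.trans hCD
  have hsC : s ∉ C := fun h' => Finset.disjoint_left.1 hdis h' (by simp)
  have hsD : s ∈ D := hc.SD (by simp)
  have hTC : ∀ t ∈ T, t ∉ C := fun t ht h' =>
    Finset.disjoint_left.1 hdis h' (mem_union_right _ ht)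
  have hsT : ∀ t ∈ T, G.Adj s t := fun t ht => hc.adj s (by simp) t ht
  have hTs : ∀ t ∈ T, t ≠ s := fun t ht h' => (hsT t ht).ne h'.symm
  have hvC := mem_bd.1 (show v ∈ bd G C W by simp [hv])
  obtain ⟨t, ht⟩ : T.Nonempty := by
    rw [← card_pos]
    have := hc.card
    omega
  have hb : bd G D W ⊆ {v, s} := by
    refine (bd_bad hW hbd hv hWT).trans ?_
    intro x hx
    simp only [mem_insert, mem_sdiff, mem_union, mem_singleton] at hx ⊢
    tauto
  set D2 := (D \ W) \ {s} with hD2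
  have hmem : ∀ x, x ∈ D2 ↔ x ∈ D ∧ x ∉ W ∧ x ≠ s := by
    intro x
    rw [hD2, mem_sdiff, mem_sdiff, mem_singleton, and_assoc]
  have htD2 : t ∈ D2 := (hmem t).2 ⟨hc.TD ht, fun h' => hTC t ht (hW h'), hTs t ht⟩
  have hWne : W ≠ D := fun h' => hsC (hW (h' ▸ hsD))
  have hD2D : D2 ⊆ D := fun x hx => ((hmem x).1 hx).1
  have hconn : Conn G D2 (nb G {s}) B := by
    intro X hX ⟨x, hx⟩
    by_contra hcon
    -- a violation of rooted 2-connectivity contains a connected one through `v`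
    have hXD : X ⊆ D := hX.trans hD2D
    have hsX : s ∉ X := fun h' => ((hmem s).1 (hX h')).2.2 rfl
    have hbX : ∀ Y, Y ⊆ D2 → v ∉ Y → bd G D Y ⊆ bd G D2 Y ∪ {s} := by
      intro Y hY hvY u hu
      obtain ⟨h1, h2, y, hy, hyu⟩ := mem_bd.1 hu
      rw [mem_union, mem_singleton]
      by_cases hus : u = s
      · exact Or.inr hus
      left
      refine mem_bd.2 ⟨(hmem u).2 ⟨h1, ?_, hus⟩, h2, y, hy, hyu⟩
      intro huW
      have h3 := (hmem y).1 (hY hy)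
      have h4 := hb (mem_bd.2 ⟨h3.1, h3.2.1, u, huW, hyu.symm⟩)
      simp only [mem_insert, mem_singleton] at h4
      rcases h4 with rfl | h4
      · exact hvY hy
      · exact h3.2.2 h4
    have hvX : v ∈ X := by
      by_contra hvX
      have h1 := h.claimA hXD (fun h' => hsX (h' ▸ hsD)) ⟨x, hx⟩
      have h2 := card_le_card (hbX X hX hvX)
      by_cases hXs : Meets X (nb G {s})
      · have h3 := card_union_le (bd G D2 X) {s}
        rw [card_singleton] at h3
        rw [ind_pos hXs] at hcon
        omega
      · have h3 : bd G D X ⊆ bd G D2 X := by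
          intro u hu
          rcases mem_union.1 (hbX X hX hvX hu) with h4 | h4
          · exact h4
          · exact absurd h4 (not_mem_of_bd hu hXs)
        have h4 := card_le_card h3
        omega
    obtain ⟨Y, hYX, hvY, hYc, hYb⟩ := exists_comp (G := G) X hvX
    have hYD2 := hYX.trans hX
    have hYD := hYX.trans hXD
    have hle : bd G D2 Y ⊆ bd G D2 X := by
      intro u hu
      obtain ⟨h1, h2, y, hy, hyu⟩ := mem_bd.1 hu
      refine mem_bd.2 ⟨h1, fun huX => ?_, y, hYX hy, hyu⟩
      have : u ∈ bd G X Y := mem_bd.2 ⟨huX, h2, y, hy, hyu⟩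
      simp [hYb] at this
    have hcon' : #(bd G D2 Y) + ind (Meets Y (nb G {s})) + ind (Meets Y B) < 2 := by
      have h1 := card_le_card hle
      have h2 := ind_mono (p := Meets Y (nb G {s})) (q := Meets X (nb G {s})) fun h' => h'.mono hYX
      have h3 := ind_mono (p := Meets Y B) (q := Meets X B) fun h' => h'.mono hYX
      omega
    obtain ⟨w, hw, hwv⟩ := hvC.2.2
    have hZc : Cn G (W ∪ Y) := hWc.union hYc hw hvY hwv
    have hZb : bd G D (W ∪ Y) ⊆ bd G D2 Y ∪ {s} := by
      intro u hu
      obtain ⟨h1, h2, y, hy, hyu⟩ := mem_bd.1 hu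
      rw [mem_union, not_or] at h2
      rw [mem_union, mem_singleton]
      by_cases hus : u = s
      · exact Or.inr hus
      left
      rcases mem_union.1 hy with hy | hy
      · have h3 := hb (mem_bd.2 ⟨h1, h2.1, y, hy, hyu⟩)
        simp only [mem_insert, mem_singleton] at h3
        rcases h3 with rfl | h3
        · exact absurd hvY h2.2
        · exact absurd h3 hus
      · exact mem_bd.2 ⟨(hmem u).2 ⟨h1, h2.1, hus⟩, h2.2, y, hy, hyu⟩
    have hsZ : s ∉ W ∪ Y := by
      rw [mem_union, not_or]
      exact ⟨fun h' => hsC (hW h'), fun h' => hsX (hYX h')⟩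
    have hZD : W ∪ Y ⊆ D := union_subset hWD hYD
    have h1 := h.claimA hZD (fun h' => hsZ (h' ▸ hsD)) hZc.1
    have h2 := card_le_card hZb
    have h3 := card_union_le (bd G D2 Y) {s}
    rw [card_singleton] at h3
    have h4 : Meets (W ∪ Y) B → Meets Y B := by
      rintro ⟨u, hu, huB⟩
      rcases mem_union.1 hu with hu | hu
      · exact absurd ⟨u, hu, huB⟩ hWB
      · exact ⟨u, hu, huB⟩
    have h5 := ind_mono h4
    have h6 : ¬ Meets Y (nb G {s}) := fun h' => by
      rw [ind_pos h'] at hcon'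
      omega
    have htY : ∀ u ∈ T, u ∉ Y := fun u hu huY => h6 ⟨u, huY, mem_nb_singleton.2 (hsT u hu)⟩
    by_cases hYB : Meets Y B
    · rw [ind_pos hYB] at hcon'
      have h7 : bd G D (W ∪ Y) ⊆ {s} := by
        refine hZb.trans ?_
        rw [card_eq_zero.1 (show #(bd G D2 Y) = 0 by omega), empty_union]
      have h8 := h.claimC hZD hZc.1 ((card_le_card h7).trans_eq (card_singleton s))
      rcases mem_union.1 (h8 (hc.TD ht)) with h9 | h9
      · rcases mem_union.1 h9 with h9 | h9
        · exact hTC t ht (hW h9)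
        · exact htY t ht h9
      · have := h7 h9
        rw [mem_singleton] at this
        exact hTs t ht this
    · rw [ind_neg hYB] at h5
      have hZB : ¬ Meets (W ∪ Y) B := fun h' => hYB (h4 h')
      obtain ⟨u, hu⟩ := card_eq_one.1 (show #(bd G D2 Y) = 1 by omega)
      rw [hu] at hZb
      have hYC : Y ⊆ C := by
        refine inter_eq_left.1 (hYc.2 (Y ∩ C) inter_subset_left
          ⟨v, mem_inter.2 ⟨hvY, hvC.1⟩⟩ ?_)
        rw [Finset.eq_empty_iff_forall_notMem]
        intro y hy
        obtain ⟨q1, q2, z, hz, hzy⟩ := mem_bd.1 hy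
        rw [mem_inter] at q2 hz
        have q3 := hbd (mem_bd.2 ⟨hYD q1, fun h' => q2 ⟨q1, h'⟩, z, hz.2, hzy⟩)
        rcases mem_union.1 q3 with q3 | q3
        · rw [mem_singleton] at q3
          exact hsX (hYX (q3 ▸ q1))
        · exact htY y q3 q1
      have hZC : W ∪ Y ⊆ C := union_subset hW hYC
      have hZne : bd G C (W ∪ Y) ≠ ∅ := by
        intro h'
        have := hC.2 _ hZC hZc.1 h'
        exact hZB (this ▸ hCB)
      have hZbC : bd G C (W ∪ Y) ⊆ {u} := by
        intro x hx
        have hx' := mem_bd.1 hx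
        have := hZb (mem_bd.2 ⟨hCD hx'.1, hx'.2⟩)
        rw [mem_union, mem_singleton, mem_singleton] at this
        rcases this with rfl | rfl
        · simp
        · exact absurd hx'.1 hsC
      have hZu : bd G C (W ∪ Y) = {u} := (subset_singleton_iff.1 hZbC).resolve_left hZne
      have huC : u ∈ C := (mem_bd.1 (show u ∈ bd G C (W ∪ Y) by simp [hZu])).1
      have hZT : ¬ Meets (W ∪ Y) (nb G T) := by
        rintro ⟨z, hz, t', ht', htz⟩
        have := hZb (mem_bd.2 ⟨hc.TD ht', fun h' => hTC t' ht' (hZC h'), z, hz, htz.symm⟩)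
        rw [mem_union, mem_singleton, mem_singleton] at this
        rcases this with rfl | rfl
        · exact hTC _ ht' huC
        · exact hTs _ ht' rfl
      have h9 := hmax (W ∪ Y) (mem_filter.2 ⟨mem_powerset.2 hZC, hZc, hZT, hZB,
        hWA.mono subset_union_left, u, hZu⟩)
      have h10 : W = W ∪ Y := eq_of_subset_of_card_le subset_union_left h9
      exact hvC.2.1 (h10 ▸ mem_union_right _ hvY)
  obtain ⟨a, d, hd, hp⟩ := two_paths v #D2 D2 (nb G {s}) B le_rfl hconn
    ⟨t, htD2, fun h' => hTC t ht (h' ▸ hvC.1)⟩ (by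
      intro w hw hwv
      have h1 := (hmem w).1 hw
      have h2 := h.deg w h1.1
      have h3 := ind_le (w ∈ A)
      have h4 := h.hk
      have h5 : nd G D w ≤ nd G D2 w + nd G {s} w := by
        refine le_trans (card_le_card ?_) (nd_union_le D2 {s} w)
        intro u hu
        rw [mem_filter] at hu ⊢
        refine ⟨?_, hu.2⟩
        rw [mem_union, mem_singleton]
        by_cases hus : u = s
        · exact Or.inr hus
        refine Or.inl ((hmem u).2 ⟨hu.1, fun huW => ?_, hus⟩)
        have := hb (mem_bd.2 ⟨h1.1, h1.2.1, u, huW, hu.2.symm⟩)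
        simp only [mem_insert, mem_singleton] at this
        exact this.elim hwv h1.2.2
      rw [nd_singleton] at h5
      omega)
  refine h.flip (s := s) (q := 2) (a := 1 + a) (d := d) hCD hC hCB hsD hsC hW hWc hv hb hWA hWB
    le_rfl hd ?_
  intro i hi
  rw [add_assoc]
  refine HasP.append (e := s) (D1 := {s}) (D2 := D2) ?_ ?_ sdiff_subset
    (HasP.single (by simp) rfl rfl) (hp i hi)
  · exact disjoint_sdiff
  · simpa using ⟨hsD, fun hsW => hsC (hW hsW)⟩

/-- All neighbours of the second root lie in the core: otherwise the component `C` of `b` outside the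
core, or a part of it attached at a single vertex of `C`, is a smaller rooted graph to which the
induction applies. -/
lemma bip_main (h : Cex G D A B k) (hc : MaxCore G D A S T) {b : V} (hbD : b ∈ D) (hb : b ∈ B)
    (hbH : b ∉ S ∪ T) : False := by
  obtain ⟨C, hCD, hbC, hdis, hC, hbd⟩ := comp_off (G := G) hbD hbH
  have hCB : Meets C B := ⟨b, hbC, hb⟩
  have hcard := hc.card
  obtain ⟨t, ht⟩ : T.Nonempty := by rw [← card_pos]; omega
  have hCDH : C ⊆ D \ (S ∪ T) := fun x hx =>
    mem_sdiff.2 ⟨hCD hx, Finset.disjoint_left.1 hdis hx⟩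
  have hCS : ∀ v ∈ C, v ∉ S := fun v hv h' =>
    Finset.disjoint_left.1 hdis hv (mem_union_left _ h')
  have hCT : ∀ v ∈ C, v ∉ T := fun v hv h' =>
    Finset.disjoint_left.1 hdis hv (mem_union_right _ h')
  have hCne : C ≠ D := fun h' => hCT t (h' ▸ hc.TD ht) ht
  by_cases hCT' : Meets C (nb G T)
  · refine h.bip_T hc.toBCore hcard (F := ∅) (B' := B) (c := 0) hCD hC hdis (by simpa using hbd)
      hCT' hCB ?_ (fun w hw => hc.nd_T (hCD hw) (hCS w hw))
      (fun w hw hwA => hc.nd_lt (hCD hw) (hCT w hw) hwA) ?_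
      (fun n hn => hn.mono hCDH (fun _ _ h => h) (fun _ _ h => h))
    · intro w hw
      rw [nd_eq_zero (by simp), zero_add]
    · intro W hW hWc v hv hWT hWB
      have hWD := hW.trans hCD
      have h1 : bd G D W ⊆ S ∪ {v} := by
        refine (bd_bad hW hbd hv hWT).trans ?_
        intro x hx
        simp only [mem_insert, mem_sdiff, mem_union, mem_singleton] at hx ⊢
        tauto
      have h2 := h.claimA hWD (fun h' => hCT t (hW (h' ▸ hc.TD ht)) ht) hWc.1
      rw [ind_neg hWB] at h2
      obtain ⟨u, hu, huv⟩ := exists_mem_ne (show 1 < #(bd G D W) by omega) v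
      have huS : u ∈ S := by
        have := h1 hu
        simp only [mem_union, mem_singleton] at this
        tauto
      obtain ⟨w, hw, hwv⟩ := (mem_bd.1 (show v ∈ bd G C W by simp [hv])).2.2
      by_cases hS : 2 ≤ #S ∨ ¬ Meets W A
      · obtain ⟨m, hm⟩ := bad_ext hC hv hCB hWB
        refine h.bip_S hc.toBCore (by omega) (F := {v}) (B' := nb G {v}) (c := m) hWD hWc
          (disjoint_of_subset_left hW hdis) h1 (meets_nb_of_bd hu huS)
          ⟨w, hw, mem_nb_singleton.2 hwv.symm⟩ ?_ ?_ ?_ ?_ ?_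
        · exact fun u hu w _ hwu => ⟨u, hu, hwu.symm⟩
        · exact fun w hw hwB => absurd ⟨w, hw, hwB⟩ hWB
        · intro w hw
          rw [nd_singleton, ind_neg fun hwB => hWB ⟨w, hw, hwB⟩, add_zero]
        · intro x hx hxA
          exact ⟨hc.nd_lt (hWD hx) (hCT x (hW hx)) hxA, hS.resolve_right fun h' => h' ⟨x, hx, hxA⟩⟩
        · intro n hn
          exact (bad_ext' hW hn hm).mono hCDH (fun _ _ h => h) (fun _ _ h => h)
      · push Not at hS
        have h3 : #S = 1 := by
          have : 0 < #S := card_pos.2 ⟨u, huS⟩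
          omega
        obtain ⟨s, rfl⟩ := card_eq_one.1 h3
        exact h.bip_one hc hCD hC hdis hbd hCB hW hWc hv hWT hWB hS.2
  · have h1 : bd G D C ⊆ S := by
      intro u hu
      have h2 := not_mem_of_bd hu hCT'
      have h3 := hbd hu
      rw [mem_union] at h3
      tauto
    obtain ⟨u, hu⟩ := h.bd_nonempty hCD hCne hC.1
    have hS : 2 ≤ #S := by
      by_contra hS
      have h3 := h.claimC hCD hC.1 ((card_le_card h1).trans (by omega))
      rcases mem_union.1 (h3 (hc.TD ht)) with h4 | h4
      · exact hCT t h4 ht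
      · exact Finset.disjoint_left.1 hc.disj (h1 h4) ht
    refine h.bip_S hc.toBCore (by omega) (F := ∅) (B' := B) (c := 0) hCD hC hdis (by simpa using h1)
      (meets_nb_of_bd hu (h1 hu)) hCB (by simp) (fun _ _ h => h) ?_
      (fun w hw hwA => ⟨hc.nd_lt (hCD hw) (hCT w hw) hwA, hS⟩)
      (fun n hn => hn.mono hCDH (fun _ _ h => h) (fun _ _ h => h))
    intro w hw
    rw [nd_eq_zero (by simp), zero_add]

end Cex

end

end CyclesAP

namespace CyclesAP

noncomputable section

open scoped Classical
open Finset

variable {V : Type*} {G : SimpleGraph V}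

namespace Cex

variable {D : Finset V} {A B : Set V} {k : ℕ} {S T : Finset V}

/-- If both roots have the neighbours `T`, then a vertex `b ∈ T` is used to enter the second root
from a part `C` outside the core. -/
lemma bip_last (h : Cex G D A B k) (hc : BCore G D A S T) (hAT : ∀ v ∈ D, v ∈ A → v ∈ T)
    (hBT : ∀ v ∈ D, v ∈ B → v ∈ T) {b : V} (hbT : b ∈ T) (hbB : b ∈ B)
    (hcard : #S + 1 ≤ #(T.erase b)) {C : Finset V} (hCD : C ⊆ D) (hC : Cn G C)
    (hdis : Disjoint C (S ∪ T)) (hbd : bd G D C ⊆ S ∪ T) (hCb : Meets C (nb G {b}))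
    (hnd : ∀ w ∈ C, nd G (T.erase b) w ≤ #S + 1) : False := by
  have hc' : BCore G D A S (T.erase b) :=
    ⟨hc.SD, (erase_subset _ _).trans hc.TD, fun t ht => hc.TA t (mem_of_mem_erase ht),
      fun s hs t ht => hc.adj s hs t (mem_of_mem_erase ht)⟩
  have hTins : S ∪ T ⊆ (S ∪ T.erase b) ∪ {b} := by
    intro x hx
    simp only [mem_union, mem_erase, mem_singleton] at hx ⊢
    tauto
  have hbS : b ∉ S := fun h' => Finset.disjoint_left.1 hc.disj h' hbT
  have hCT : ∀ v ∈ C, v ∉ T := fun v hv h' =>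
    Finset.disjoint_left.1 hdis hv (mem_union_right _ h')
  have hCA : ∀ v ∈ C, v ∉ A := fun v hv h' => hCT v hv (hAT v (hCD hv) h')
  have hCB : ∀ v ∈ C, v ∉ B := fun v hv h' => hCT v hv (hBT v (hCD hv) h')
  have hbC : b ∉ C := fun h' => hCT b h' hbT
  have hCne : C ≠ D := fun h' => hbC (h' ▸ hc.TD hbT)
  have hdis' : Disjoint C (S ∪ T.erase b) :=
    hdis.mono_right (union_subset_union (fun _ h => h) (erase_subset _ _))
  -- paths through `C` to a neighbour of `b` continue to the second root through `b`
  have hpath : ∀ (X : Set V) n, HasP G C X (nb G {b}) n →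
      HasP G (D \ (S ∪ T.erase b)) X B (n + 1) := by
    intro X n hn
    refine glue' (T := {b}) (D2 := {b}) (by simpa using hbC) ?_ ?_ hn (fun _ _ h => h) ?_
    · exact fun x hx => mem_sdiff.2 ⟨hCD hx, Finset.disjoint_left.1 hdis' hx⟩
    · simpa using ⟨hc.TD hbT, hbS⟩
    · intro e he
      rw [mem_singleton] at he
      subst he
      exact HasP.single (by simp) rfl hbB
  by_cases hCT' : Meets C (nb G (T.erase b))
  · refine h.bip_T hc' hcard (F := {b}) (c := 1) hCD hC hdis' (hbd.trans hTins) hCT' hCb ?_ hnd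
      (fun w hw hwA => absurd hwA (hCA w hw)) ?_ (hpath _)
    · intro w hw
      rw [nd_singleton, ind_neg (hCB w hw), add_zero]
    · intro W hW hWc v hv hWT hWb
      have hWD := hW.trans hCD
      have h1 : bd G D W ⊆ S ∪ {v} := by
        intro x hx
        have h2 := bd_bad hW (hbd.trans hTins) hv hWT hx
        have h3 := not_mem_of_bd hx hWb
        simp only [mem_insert, mem_sdiff, mem_union, mem_singleton] at h2 h3 ⊢
        tauto
      have h2 := h.claimA hWD (fun h' => hbC (hW (h' ▸ hc.TD hbT))) hWc.1
      rw [ind_neg fun ⟨w, hw, hwB⟩ => hCB w (hW hw) hwB] at h2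
      obtain ⟨u, hu, huv⟩ := exists_mem_ne (show 1 < #(bd G D W) by omega) v
      have huS : u ∈ S := by
        have := h1 hu
        simp only [mem_union, mem_singleton] at this
        tauto
      obtain ⟨w, hw, hwv⟩ := (mem_bd.1 (show v ∈ bd G C W by simp [hv])).2.2
      obtain ⟨m, hm⟩ := bad_ext hC hv hCb hWb
      refine h.bip_S hc' (by omega) (F := {v}) (B' := nb G {v}) (c := m + 1) hWD hWc
        (disjoint_of_subset_left hW hdis') h1 (meets_nb_of_bd hu huS)
        ⟨w, hw, mem_nb_singleton.2 hwv.symm⟩ ?_ ?_ ?_ ?_ ?_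
      · exact fun u hu w _ hwu => ⟨u, hu, hwu.symm⟩
      · exact fun w hw hwB => absurd hwB (hCB w (hW hw))
      · intro w hw
        rw [nd_singleton, ind_neg (hCB w (hW hw)), add_zero]
      · exact fun x hx hxA => absurd hxA (hCA x (hW hx))
      · intro n hn
        exact hpath _ _ (bad_ext' hW hn hm)
  · have h1 : bd G D C ⊆ S ∪ {b} := by
      intro u hu
      have h2 := not_mem_of_bd hu hCT'
      have h3 := hTins (hbd hu)
      simp only [mem_union, mem_singleton] at h2 h3 ⊢
      tauto
    have h2 := h.claimA hCD hCne hC.1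
    rw [ind_neg fun ⟨w, hw, hwB⟩ => hCB w hw hwB] at h2
    obtain ⟨u, hu, hub⟩ := exists_mem_ne (show 1 < #(bd G D C) by omega) b
    have huS : u ∈ S := by
      have := h1 hu
      simp only [mem_union, mem_singleton] at this
      tauto
    refine h.bip_S hc' (by omega) (F := {b}) (B' := nb G {b}) (c := 1) hCD hC hdis' h1
      (meets_nb_of_bd hu huS) hCb ?_ ?_ ?_ ?_ (hpath _)
    · exact fun u hu w _ hwu => ⟨u, hu, hwu.symm⟩
    · exact fun w hw hwB => absurd hwB (hCB w hw)
    · intro w hw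
      rw [nd_singleton, ind_neg (hCB w hw), add_zero]
    · exact fun x hx hxA => absurd hxA (hCA x hx)

/-- If both roots have exactly the neighbours `T`, a vertex `b ∈ T` is removed from the core, together
with a vertex of `S` if `|T| = |S| + 1`, and `bip_last` applies. -/
lemma bip_fin (h : Cex G D A B k) (hc : MaxCore G D A S T) (hAT : ∀ v ∈ D, v ∈ A → v ∈ T)
    (hBT : ∀ v ∈ D, v ∈ B → v ∈ T) (hTB : ∀ t ∈ T, t ∈ B) : False := by
  have hcard := hc.card
  obtain ⟨b, hb⟩ : T.Nonempty := by rw [← card_pos]; omega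
  have hk : #S + 2 ≤ k := by
    by_contra hk
    refine h.no ⟨1, 2, Or.inr rfl, fun i hi => ?_⟩
    rw [add_comm]
    refine (bip i S T b hc.disj hc.adj hb (by omega) (by omega)).mono hc.HD (fun v _ => hc.TA v) ?_
    rintro v - rfl
    exact hTB v hb
  have herase := card_erase_of_mem hb
  rcases Nat.lt_or_ge #T (#S + 2) with hT | hT
  · obtain ⟨b', hb'D, hb', hbb'⟩ := h.two_le b
    have h1 : 1 < #T := one_lt_card.2 ⟨b', hBT b' hb'D hb', b, hb, hbb'⟩
    obtain ⟨s, hs⟩ : S.Nonempty := by rw [← card_pos]; omega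
    have hserase := card_erase_of_mem hs
    have hc' : BCore G D A (S.erase s) T :=
      ⟨(erase_subset _ _).trans hc.SD, hc.TD, hc.TA, fun s' hs' => hc.adj s' (mem_of_mem_erase hs')⟩
    have hsH : s ∉ S.erase s ∪ T := by
      rw [mem_union, not_or]
      exact ⟨notMem_erase _ _, fun h' => Finset.disjoint_left.1 hc.disj hs h'⟩
    obtain ⟨C, hCD, hsC, hdis, hC, hbd⟩ := comp_off (G := G) (hc.SD hs) hsH
    refine h.bip_last hc' hAT hBT hb (hTB b hb) (by omega) hCD hC hdis hbd
      ⟨s, hsC, mem_nb_singleton.2 (hc.adj s hs b hb).symm⟩ ?_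
    intro w _
    have := nd_le_card (G := G) (T.erase b) w
    omega
  · have h1 := h.deg b (hc.TD hb)
    have h2 := ind_le (b ∈ A)
    have h3 := ind_le (b ∈ B)
    have h4 := nd_le_card (G := G) S b
    have h5 : nd G T b = 0 := nd_eq_zero fun t ht hbt =>
      h.caseI (hc.TD hb) (hc.TD ht) (hc.TA b hb) (hc.TA t ht) hbt
    -- `b` has a neighbour outside the core, as `k` is too large otherwise
    obtain ⟨c, hcD, hbc, hcH⟩ : ∃ c ∈ D, G.Adj b c ∧ c ∉ S ∪ T := by
      by_contra hcon
      push Not at hcon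
      have h6 : nd G D b ≤ nd G (S ∪ T) b := by
        refine card_le_card fun u hu => ?_
        rw [mem_filter] at hu ⊢
        exact ⟨hcon u hu.1 hu.2, hu.2⟩
      have h7 := nd_union_le (G := G) S T b
      omega
    obtain ⟨C, hCD, hcC, hdis, hC, hbd⟩ := comp_off (G := G) hcD hcH
    refine h.bip_last hc.toBCore hAT hBT hb (hTB b hb) (by omega) hCD hC hdis hbd
      ⟨c, hcC, mem_nb_singleton.2 hbc⟩ ?_
    intro w hw
    refine (nd_mono (erase_subset b T) w).trans (hc.nd_T (hCD hw) fun hwS => ?_)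
    exact Finset.disjoint_left.1 hdis hw (mem_union_left _ hwS)

/-- There is no minimal counterexample. -/
lemma contra (h : Cex G D A B k) : False := by
  obtain ⟨S, T, hc⟩ := h.exists_maxCore
  obtain ⟨S', T', hc'⟩ := h.symm.exists_maxCore
  have hB : ∀ b ∈ D, b ∈ B → b ∈ S ∪ T := by
    intro b hbD hb
    by_contra hbH
    exact h.bip_main hc hbD hb hbH
  have hA : ∀ a ∈ D, a ∈ A → a ∈ S' ∪ T' := by
    intro a haD ha
    by_contra haH
    exact h.symm.bip_main hc' haD ha haH
  have hcard := hc.card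
  have hcard' := hc'.card
  have hBT : ∀ b ∈ D, b ∈ B → b ∈ T := by
    intro b hbD hb
    rcases mem_union.1 (hB b hbD hb) with hbS | hbT
    · exfalso
      -- then `T' ⊆ S` and `T ⊆ S'`, which is impossible by the sizes
      have h1 : T' ⊆ S := by
        intro t ht
        rcases mem_union.1 (hB t (hc'.TD ht) (hc'.TA t ht)) with h2 | h2
        · exact h2
        · exact absurd (hc.adj b hbS t h2) (h.symm.caseI hbD (hc'.TD ht) hb (hc'.TA t ht))
      have h2 : T ⊆ S' := by
        intro t ht
        rcases mem_union.1 (hA t (hc.TD ht) (hc.TA t ht)) with h2 | h2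
        · exact h2
        · exact absurd ht (Finset.disjoint_left.1 hc.disj (h1 h2))
      have h3 := card_le_card h1
      have h4 := card_le_card h2
      omega
    · exact hbT
  have hAT' : ∀ a ∈ D, a ∈ A → a ∈ T' := by
    intro a haD ha
    rcases mem_union.1 (hA a haD ha) with haS | haT
    · exfalso
      obtain ⟨t, ht⟩ : T'.Nonempty := by rw [← card_pos]; omega
      exact h.caseI haD (hc'.TD ht) ha (hc.TA t (hBT t (hc'.TD ht) (hc'.TA t ht)))
        (hc'.adj a haS t ht)
    · exact haT
  refine h.bip_fin hc ?_ hBT fun t ht => hc'.TA t (hAT' t (hc.TD ht) (hc.TA t ht))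
  intro a haD ha
  exact hBT a haD (hc'.TA a (hAT' a haD ha))

end Cex

/-! ### The rooted theorem -/

/-- If all vertices of a rooted 2-connected graph have degree at least `k + 1`, then there are `k`
paths between the roots whose lengths form an arithmetic progression with common difference one or
two. -/
theorem rooted (N : ℕ) : ∀ (D : Finset V) (A B : Set V) (k : ℕ), #D < N → D.Nonempty → 1 ≤ k →
    Conn G D A B → (∀ v ∈ D, k + 1 ≤ nd G D v + ind (v ∈ A) + ind (v ∈ B)) →
    AP (HasP G D A B) k := by
  induction N with
  | zero => intro D A B k hD; omega
  | succ N ih =>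
    intro D A B k hD hne hk hc hdeg
    obtain ⟨v, hv⟩ := hne
    rcases Nat.lt_or_ge k 3 with hk3 | hk3
    · obtain rfl | rfl : k = 1 ∨ k = 2 := by omega
      · obtain ⟨n, hn⟩ := hc.path ⟨v, hv⟩
        exact AP.one hn
      · have h1 := hdeg v hv
        have h2 := ind_le (v ∈ A)
        have h3 := ind_le (v ∈ B)
        have h4 : 0 < nd G D v := by omega
        obtain ⟨z, hz⟩ := card_pos.1 h4
        rw [mem_filter] at hz
        exact two_paths z #D D A B le_rfl hc ⟨v, hv, hz.2.ne⟩ fun w hw _ => hdeg w hw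
    · by_contra hno
      exact Cex.contra ⟨hk3, ⟨v, hv⟩, hc, hdeg, hno,
        fun D' A' B' k' h1 h2 h3 h4 h5 => ih D' A' B' k' (by omega) h2 h3 h4 h5⟩

end

end CyclesAP

namespace CyclesAP

noncomputable section

open scoped Classical
open Finset

variable {V : Type*} {G : SimpleGraph V}

/-! ### From rooted paths to cycles -/

/-- A path between a neighbour of `x` and one of `y` that avoids the edge `xy` closes to a
cycle. -/
lemma HasP.cycle {D : Finset V} {x y : V} {n : ℕ} (hxy : G.Adj x y) (hx : x ∉ D) (hy : y ∉ D)
    (h : HasP G D (nb G {x}) (nb G {y}) n) : ∃ c : G.Walk x x, c.IsCycle ∧ c.length = n + 2 := by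
  obtain ⟨l, h1, h2, h3, h4, ⟨b, hb, hb'⟩, a, ha, ha'⟩ := h.symm
  have hne : l ≠ [] := by
    rintro rfl
    simp at hb'
  obtain ⟨p, hp, hpl⟩ : ∃ p : G.Walk b a, p.support = l ∧ p.length = n - 1 := by
    rw [List.head?_eq_some_head hne, Option.some_inj] at hb'
    rw [List.getLast?_eq_some_getLast hne, Option.some_inj] at ha'
    subst hb' ha'
    exact ⟨Walk.ofSupport l hne h3, Walk.support_ofSupport hne h3,
      by rw [Walk.length_ofSupport, h1]⟩
  have hn : 1 ≤ n := by
    rw [← h1]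
    exact List.length_pos_iff.2 hne
  have hxa : G.Adj a x := (mem_nb_singleton.1 ha).symm
  have hyb : G.Adj y b := mem_nb_singleton.1 hb
  have hxp : x ∉ p.support := fun h' => hx (h4 x (hp ▸ h'))
  have hyp : y ∉ p.support := fun h' => hy (h4 y (hp ▸ h'))
  have hxb : x ≠ b := fun h' => hxp (h' ▸ p.start_mem_support)
  have hya : y ≠ a := fun h' => hyp (h' ▸ p.end_mem_support)
  refine ⟨Walk.cons hxy (Walk.cons hyb (p.concat hxa)), ?_, ?_⟩
  · rw [Walk.cons_isCycle_iff, Walk.cons_isPath_iff, Walk.concat_isPath_iff, Walk.isPath_def, hp]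
    refine ⟨⟨⟨h2, hp ▸ hxp⟩, ?_⟩, ?_⟩
    · rw [Walk.support_concat, List.mem_append, List.mem_singleton, not_or]
      exact ⟨hyp, hxy.ne'⟩
    · rw [Walk.edges_cons, Walk.edges_concat, List.concat_eq_append, List.mem_cons, List.mem_append,
        List.mem_singleton, not_or, not_or]
      refine ⟨?_, fun h' => hxp (p.fst_mem_support_of_mem_edges h'), ?_⟩
      · rw [Sym2.eq_iff]
        rintro (h' | h')
        · exact hxy.ne h'.1
        · exact hxb h'.1
      · rw [Sym2.eq_iff]
        rintro (h' | h')
        · exact hxy.ne h'.2.symm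
        · exact hya h'.2
  · simp only [Walk.length_cons, Walk.length_concat, hpl]
    omega

lemma mem_of_connected {U : Type*} {H : SimpleGraph U} (hH : H.Connected) {P : Set U} {w : U}
    (hw : w ∈ P) (hcl : ∀ a b, H.Adj a b → a ∈ P → b ∈ P) (u : U) : u ∈ P := by
  obtain ⟨p⟩ := hH.preconnected w u
  induction p with
  | nil => exact hw
  | cons hadj _ ih => exact ih (hcl _ _ hadj hw)

/-- Deleting the ends of an edge `xy` from a 2-connected graph leaves a rooted 2-connected graph. -/
lemma conn_of_twoConnected [Fintype V] (h : TwoConnected G) {x y : V} (hxy : G.Adj x y) :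
    Conn G (univ \ {x, y}) (nb G {x}) (nb G {y}) := by
  intro W hW ⟨w, hw⟩
  by_contra hcon
  have hxW : x ∉ W := fun h' => by simpa using hW h'
  have hyW : y ∉ W := fun h' => by simpa using hW h'
  have hle : #(bd G univ W) ≤ #(bd G (univ \ {x, y}) W) + ind (Meets W (nb G {x})) +
      ind (Meets W (nb G {y})) := by
    let R : V → Finset V := fun z => if Meets W (nb G {z}) then {z} else ∅
    have hR : ∀ z, #(R z) = ind (Meets W (nb G {z})) := by
      intro z
      simp only [R, ind]
      split_ifs <;> simp
    have hsub : bd G univ W ⊆ bd G (univ \ {x, y}) W ∪ R x ∪ R y := by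
      intro u hu
      obtain ⟨-, h2, a, ha, hau⟩ := mem_bd.1 hu
      have hm : Meets W (nb G {u}) := ⟨a, ha, mem_nb_singleton.2 hau.symm⟩
      rw [mem_union, mem_union]
      by_cases hux : u = x
      · subst hux
        simp [R, hm]
      by_cases huy : u = y
      · subst huy
        simp [R, hm]
      exact Or.inl (Or.inl (mem_bd.2 ⟨by simp [hux, huy], h2, a, ha, hau⟩))
    have h1 := card_le_card hsub
    have h2 := card_union_le (bd G (univ \ {x, y}) W ∪ R x) (R y)
    have h3 := card_union_le (bd G (univ \ {x, y}) W) (R x)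
    rw [hR] at h2 h3
    omega
  obtain ⟨z, hzW, hz⟩ : ∃ z, z ∉ W ∧ bd G univ W ⊆ {z} := by
    rcases Finset.eq_empty_or_nonempty (bd G univ W) with h0 | ⟨z, hz⟩
    · exact ⟨x, hxW, by simp [h0]⟩
    · refine ⟨z, (mem_bd.1 hz).2.1, fun u hu => ?_⟩
      rw [mem_singleton]
      exact card_le_one.1 (show #(bd G univ W) ≤ 1 by omega) u hu z hz
  have hwz : w ≠ z := fun h' => hzW (h' ▸ hw)
  have key : ∀ u, u ≠ z → u ∈ W := by
    intro u hu
    refine mem_of_connected (h.2.2 z) (P := {v | (v : V) ∈ W}) (w := ⟨w, hwz⟩) hw ?_ ⟨u, hu⟩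
    rintro ⟨a, ha⟩ ⟨b, hb⟩ hab haW
    by_contra hbW
    have := hz (mem_bd.2 ⟨mem_univ b, hbW, a, haW, hab⟩)
    rw [mem_singleton] at this
    exact hb this
  by_cases hxz : x = z
  · exact hyW (key y (hxz ▸ hxy.ne'))
  · exact hxW (key x hxz)

/-- The cycle lengths of a 2-connected graph of minimum degree at least `k + 1` contain an
arithmetic progression with `k` terms and common difference one or two. -/
lemma exists_cycles [Fintype V] {k : ℕ} (hk : 0 < k) (h2 : TwoConnected G)
    (hdeg : ∀ v : V, k + 1 ≤ nd G univ v) :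
    ∃ x : V, AP (fun n => ∃ c : G.Walk x x, c.IsCycle ∧ c.length = n) k := by
  obtain ⟨x⟩ := h2.1.nonempty
  obtain ⟨y, hy⟩ := card_pos.1 (show 0 < #(univ.filter (G.Adj x)) by
    have := hdeg x
    unfold nd at this
    omega)
  have hxy : G.Adj x y := (mem_filter.1 hy).2
  have hne : (univ \ {x, y} : Finset V).Nonempty := by
    rw [← card_pos]
    have h1 := le_card_sdiff ({x, y} : Finset V) univ
    have h3 := card_le_two (a := x) (b := y)
    have h4 := h2.2.1
    rw [card_univ] at h1
    omega
  refine ⟨x, (rooted _ (univ \ {x, y}) (nb G {x}) (nb G {y}) k (Nat.lt_succ_self _) hne hk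
    (conn_of_twoConnected h2 hxy) ?_).shift 2 ?_⟩
  · intro v _
    have h1 : nd G univ v ≤ nd G (univ \ {x, y} ∪ {x, y}) v := 
      nd_mono (by rw [sdiff_union_of_subset (subset_univ _)]) v
    have h3 := nd_union_le (G := G) (univ \ {x, y}) {x, y} v
    have h4 := nd_pair (G := G) x y v
    have h5 := hdeg v
    omega
  · intro n hn
    obtain ⟨c, hc, hcl⟩ := hn.cycle hxy (by simp) (by simp)
    exact ⟨c, hc, by omega⟩

end

end CyclesAP

/-- For every positive integer `k`, every 2-connected finite simple graph of minimum
degree at least `k + 1` contains `k` cycles `C_1, …, C_k` such that either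
(i) `|E(C_{i+1})| − |E(C_i)| = 1` for all `1 ≤ i ≤ k − 1`, or
(ii) `|E(C_{i+1})| − |E(C_i)| = 2` for all `1 ≤ i ≤ k − 1`. -/
theorem k_cycles_diff_one_or_two {V : Type*} [Fintype V] (k : ℕ) (hk : 0 < k)
    (G : SimpleGraph V) [DecidableRel G.Adj]
    (h2 : TwoConnected G)
    (hdeg : ∀ v : V, k + 1 ≤ G.degree v) :
    ∃ (v : ℕ → V) (c : ∀ i : ℕ, G.Walk (v i) (v i)),
      (∀ i, 1 ≤ i → i ≤ k → (c i).IsCycle) ∧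
      ((∀ i, 1 ≤ i → i ≤ k - 1 → (c (i + 1)).length = (c i).length + 1) ∨
       (∀ i, 1 ≤ i → i ≤ k - 1 → (c (i + 1)).length = (c i).length + 2)) := by
  classical
  obtain ⟨x, a, d, hd, h⟩ := CyclesAP.exists_cycles hk h2 fun v => by
    have h1 := hdeg v
    rw [← G.card_neighborFinset_eq_degree, G.neighborFinset_eq_filter] at h1
    refine h1.trans_eq ?_
    unfold CyclesAP.nd
    congr
  have h' : ∀ i, ∃ c : G.Walk x x, i < k → c.IsCycle ∧ c.length = a + d * i := by
    intro i
    by_cases hi : i < k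
    · obtain ⟨c, hc⟩ := h i hi
      exact ⟨c, fun _ => hc⟩
    · exact ⟨.nil, fun hi' => absurd hi' hi⟩
  choose c hc using h'
  have hlen : ∀ i, 1 ≤ i → i ≤ k - 1 → (c (i + 1 - 1)).length = (c (i - 1)).length + d := by
    intro i h1 h3
    rw [(hc _ (show i + 1 - 1 < k by omega)).2, (hc _ (show i - 1 < k by omega)).2]
    obtain ⟨j, rfl⟩ : ∃ j, i = j + 1 := ⟨i - 1, by omega⟩
    simp only [Nat.add_sub_cancel]
    ring
  refine ⟨fun _ => x, fun i => c (i - 1), fun i h1 h3 => (hc _ (by omega)).1, ?_⟩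
  rcases hd with rfl | rfl
  · exact Or.inl hlen
  · exact Or.inr hlen
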